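/- arXiv:1606.09052 — 4 statements merged into one kernel-verified Lean document; each statement's English description precedes it below -/
import Mathlib

section
/- Under these hypotheses the generators M_n = M_{1,n} satisfy the quantum current exchange relations: for all n ∈ ℤ and all integers p ≥ 1, [M_n, M_{n+p}]_q + [M_{n+p-1}, M_{n+1}]_q = 0, i.e. M_n·M_{n+p} − q·M_{n+p}·M_n + M_{n+p-1}·M_{n+1} − q·M_{n+1}·M_{n+p-1} = 0. -/
/-!
Put `ξ_{α,n} = M_{α,n+1} M_{α,n}⁻¹` and `ρ_{α,n} = M_{α+1,n} M_{α,n}⁻¹`. The quasi-commutation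
relations give `ρ_{α,n+1} ρ_{α,n}⁻¹ = ξ_{α+1,n} ξ_{α,n}⁻¹`, and the M-system becomes
`ξ_{α,n+1} ξ_{α,n}⁻¹ + ρ_{α,n+1} ρ_{α-1,n+1}⁻¹ = 1`. Together they say that the weights
`o_j(n) = ξ_{j+1,n+j} ξ_{j,n+j-1}⁻¹` and `e_{j+1}(n) = -ρ_{j+1,n+j+1} ρ_{j,n+j}⁻¹` satisfy the
noncommutative rhombus rules of the quotient-difference algorithm, so the finite Stieltjes
continued fraction `F_n` with weights `X o_0, X e_1, X o_1, …, X e_r, X o_r` satisfies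
`F_n = 1 + F_{n+1} X o_0(n)`, that is, `F_n M_n = ∑ M_{n+k} X ^ k`.

All weights other than `o_0` and `e_1` commute with `M_n` and `M_{n+1}`. Hence `F_n` has the form
`(1 - D⁻¹ y)⁻¹` with `y = X o_0(n)`, where `M_n` commutes with `D` and `q`-commutes with `y`, while
`y D = q D y + (1 - q) y`. These three relations imply a quadratic identity for `F_n M_n` whose
coefficient of `X ^ p` is the exchange relation.
-/

open scoped Ring

section QCommute

variable {K R : Type*} [CommRing K] [Ring R] [Algebra K R] {q : Kˣ} {v w : ℤ} {x y z : R}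

/-- `x` and `y` commute up to the power `q ^ w` of the quantum parameter. -/
def QCommute (q : Kˣ) (w : ℤ) (x y : R) : Prop :=
  x * y = (q ^ w) • (y * x)

namespace QCommute

theorem symm (h : QCommute q w x y) : QCommute q (-w) y x := by
  rw [QCommute, h, smul_smul, ← zpow_add, neg_add_cancel, zpow_zero, one_smul]

theorem of_eq (h : QCommute q v x y) (hvw : v = w) : QCommute q w x y :=
  hvw ▸ h

theorem of_commute (h : Commute x y) : QCommute q 0 x y := by
  rw [QCommute, zpow_zero, one_smul, h.eq]

theorem commute (h : QCommute q 0 x y) : Commute x y := by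
  rwa [QCommute, zpow_zero, one_smul] at h

theorem mul_eq_smul (h : QCommute q 1 x y) : x * y = (q : K) • (y * x) := by
  rwa [QCommute, zpow_one, Units.smul_def] at h

theorem mul_right (hy : QCommute q v x y) (hz : QCommute q w x z) :
    QCommute q (v + w) x (y * z) := by
  rw [QCommute, ← mul_assoc, hy, smul_mul_assoc, mul_assoc, hz, mul_smul_comm, smul_smul,
    ← zpow_add, mul_assoc]

theorem mul_left (hx : QCommute q v x z) (hy : QCommute q w y z) :
    QCommute q (v + w) (x * y) z := by
  simpa only [neg_add, neg_neg] using (hx.symm.mul_right hy.symm).symm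

theorem units_inv_right {u : Rˣ} (h : QCommute q w x u) :
    QCommute q (-w) x (u⁻¹ : Rˣ) := by
  rw [QCommute, Units.mul_inv_eq_iff_eq_mul, smul_mul_assoc, mul_assoc, h, mul_smul_comm,
    Units.inv_mul_cancel_left, smul_smul, ← zpow_add, neg_add_cancel, zpow_zero, one_smul]

theorem units_inv_left {u : Rˣ} (h : QCommute q w (u : R) x) :
    QCommute q (-w) ((u⁻¹ : Rˣ) : R) x :=
  neg_neg (-w) ▸ h.symm.units_inv_right.symm

theorem neg_right (hy : QCommute q w x y) : QCommute q w x (-y) := by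
  rw [QCommute, mul_neg, hy, neg_mul, smul_neg]

end QCommute

end QCommute

section StieltjesFraction

variable {S : Type*} [Ring S]

theorem inverse_one_sub_inverse_mul_mul_inverse {D : S} (hD : IsUnit D) (y : S) :
    (1 - D⁻¹ʳ * y)⁻¹ʳ * D⁻¹ʳ = (D - y)⁻¹ʳ := by
  rw [← Ring.inverse_mul (.inl hD), mul_sub, mul_one, Ring.mul_inverse_cancel_left _ _ hD]

theorem inverse_one_sub_eq_one_add {x : S} (hx : IsUnit (1 - x)) :
    (1 - x)⁻¹ʳ = 1 + (1 - x)⁻¹ʳ * x := by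
  rw [← sub_eq_iff_eq_add, ← mul_one_sub, Ring.inverse_mul_cancel _ hx]

/-- The truncated Stieltjes continued fraction
`(1 - (1 - (1 - (⋯) * e (j + 1))⁻¹ * o j)⁻¹ * e j)⁻¹` that starts at `e j` and contains `d` pairs
of weights `e i`, `o i`. -/
noncomputable def evenFraction (e o : ℕ → S) : ℕ → ℕ → S
  | 0, _ => 1
  | d + 1, j => (1 - (1 - evenFraction e o d (j + 1) * o j)⁻¹ʳ * e j)⁻¹ʳ

/-- The truncated Stieltjes continued fraction that starts at `o j`, followed by `d` pairs of
weights `e i`, `o i`. -/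
noncomputable def oddFraction (e o : ℕ → S) (d j : ℕ) : S :=
  (1 - evenFraction e o d (j + 1) * o j)⁻¹ʳ

variable {e o e' o' : ℕ → S}

theorem evenFraction_succ (e o : ℕ → S) (d j : ℕ) :
    evenFraction e o (d + 1) j = (1 - oddFraction e o d j * e j)⁻¹ʳ := rfl

theorem evenFraction_succ_of_eq_zero {j : ℕ} (hj : e j = 0) (d : ℕ) :
    evenFraction e o (d + 1) j = 1 := by
  rw [evenFraction_succ, hj, mul_zero, sub_zero, Ring.inverse_one]

theorem evenFraction_mul_oddFraction (ho : ∀ f j, IsUnit (1 - f * o j)) (d j : ℕ) :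
    evenFraction e o (d + 1) j * oddFraction e o d j
      = (1 - evenFraction e o d (j + 1) * o j - e j)⁻¹ʳ :=
  inverse_one_sub_inverse_mul_mul_inverse (ho _ _) _

theorem oddFraction_mul_evenFraction (he : ∀ f j, IsUnit (1 - f * e j)) (d j : ℕ) :
    oddFraction e o (d + 1) j * evenFraction e o (d + 1) (j + 1)
      = (1 - oddFraction e o d (j + 1) * e (j + 1) - o j)⁻¹ʳ :=
  inverse_one_sub_inverse_mul_mul_inverse (he _ _) _

theorem evenFraction_eq_one_add (he : ∀ f j, IsUnit (1 - f * e j)) (d j : ℕ) :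
    evenFraction e o (d + 1) j
      = 1 + evenFraction e o (d + 1) j * oddFraction e o d j * e j := by
  rw [mul_assoc]
  exact inverse_one_sub_eq_one_add (he _ _)

theorem oddFraction_eq_one_add (ho : ∀ f j, IsUnit (1 - f * o j)) (d j : ℕ) :
    oddFraction e o d j = 1 + oddFraction e o d j * evenFraction e o d (j + 1) * o j := by
  rw [mul_assoc]
  exact inverse_one_sub_eq_one_add (ho _ _)

/-- Both products contract to the same Jacobi continued fraction: the two rhombus rules of the
quotient-difference algorithm say that its coefficients agree. -/
theorem evenFraction_mul_oddFraction_eq_of_rhombus {r : ℕ}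
    (he : ∀ f j, IsUnit (1 - f * e j)) (ho : ∀ f j, IsUnit (1 - f * o j))
    (he' : ∀ f j, IsUnit (1 - f * e' j)) (ho' : ∀ f j, IsUnit (1 - f * o' j))
    (add_rhombus : ∀ j ≤ r, o j + e (j + 1) = e' j + o' j)
    (mul_rhombus : ∀ j < r, e' (j + 1) * o' j = o (j + 1) * e (j + 1))
    (e_top : e (r + 1) = 0) {d j : ℕ} (hdj : j + d = r) :
    evenFraction e' o' (d + 1) j * oddFraction e' o' d j
      = oddFraction e o d j * evenFraction e o d (j + 1) := by
  induction d generalizing j with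
  | zero =>
    obtain rfl : j = r := hdj
    have top : o j = e' j + o' j := by rw [← add_rhombus j le_rfl, e_top, add_zero]
    rw [evenFraction_mul_oddFraction ho', oddFraction]
    simp only [evenFraction, one_mul, mul_one, top]
    congr 1
    abel
  | succ d ih =>
    have ih := ih (j := j + 1) (by lia)
    rw [evenFraction_mul_oddFraction ho', oddFraction_mul_evenFraction he,
      evenFraction_eq_one_add he', oddFraction_eq_one_add ho, ih]
    congr 1
    simp only [add_mul, one_mul, mul_assoc, mul_rhombus j (by lia)]
    rw [eq_sub_of_add_eq (add_rhombus j (by lia))]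
    abel

theorem oddFraction_eq_one_add_of_rhombus {r : ℕ}
    (he : ∀ f j, IsUnit (1 - f * e j)) (ho : ∀ f j, IsUnit (1 - f * o j))
    (he' : ∀ f j, IsUnit (1 - f * e' j)) (ho' : ∀ f j, IsUnit (1 - f * o' j))
    (add_rhombus : ∀ j ≤ r, o j + e (j + 1) = e' j + o' j)
    (mul_rhombus : ∀ j < r, e' (j + 1) * o' j = o (j + 1) * e (j + 1))
    (e_top : e (r + 1) = 0) (e'_zero : e' 0 = 0) :
    oddFraction e o r 0 = 1 + oddFraction e' o' r 0 * o 0 := by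
  have shift := evenFraction_mul_oddFraction_eq_of_rhombus he ho he' ho' add_rhombus mul_rhombus
    e_top (zero_add r)
  rw [evenFraction_succ_of_eq_zero e'_zero, one_mul] at shift
  rw [shift]
  exact oddFraction_eq_one_add ho r 0

theorem commute_ringInverse_right {x y : S} (h : Commute x y) : Commute x y⁻¹ʳ := by
  by_cases hy : IsUnit y
  · obtain ⟨u, rfl⟩ := hy
    rw [Ring.inverse_unit]
    exact h.units_inv_right
  · rw [Ring.inverse_non_unit y hy]
    exact Commute.zero_right x

theorem commute_oddFraction {x : S} {d j : ℕ} (he : Commute x (evenFraction e o d (j + 1)))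
    (ho : Commute x (o j)) : Commute x (oddFraction e o d j) :=
  commute_ringInverse_right ((Commute.one_right x).sub_right (he.mul_right ho))

theorem commute_evenFraction {x : S} {d j : ℕ} (he : ∀ i, j ≤ i → i < j + d → Commute x (e i))
    (ho : ∀ i, j ≤ i → i < j + d → Commute x (o i)) : Commute x (evenFraction e o d j) := by
  induction d generalizing j with
  | zero => exact Commute.one_right x
  | succ d ih =>
    have tail : Commute x (evenFraction e o d (j + 1)) :=
      ih (fun i hi hi' => he i (by lia) (by lia)) (fun i hi hi' => ho i (by lia) (by lia))
    have head : Commute x (oddFraction e o d j) :=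
      commute_oddFraction tail (ho j le_rfl (by lia))
    exact commute_ringInverse_right
      ((Commute.one_right x).sub_right (head.mul_right (he j le_rfl (by lia))))

end StieltjesFraction

section ExchangeIdentity

variable {K S : Type*} [CommRing K] [Ring S] [Algebra K S] {q : K} {m y D : S}

theorem mul_one_sub_mul_eq {G z : S} (hyG : Commute y G) (hyz : y * z = q • (z * y)) :
    y * (1 - G * z) = q • ((1 - G * z) * y) + (1 - q) • y := by
  rw [mul_sub, mul_one, ← mul_assoc, hyG.eq, mul_assoc, hyz, mul_smul_comm, sub_mul, one_mul,
    mul_assoc]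
  module

theorem inverse_mul_eq_of_mul_eq (hD : IsUnit D) (hyD : y * D = q • (D * y) + (1 - q) • y) :
    D⁻¹ʳ * y = q • (y * D⁻¹ʳ) + (1 - q) • (D⁻¹ʳ * y * D⁻¹ʳ) := by
  calc D⁻¹ʳ * y = D⁻¹ʳ * (y * D) * D⁻¹ʳ := by
        rw [← mul_assoc, Ring.mul_inverse_cancel_right _ _ hD]
    _ = q • (y * D⁻¹ʳ) + (1 - q) • (D⁻¹ʳ * y * D⁻¹ʳ) := by
        rw [hyD]
        simp only [mul_add, add_mul, mul_smul_comm, smul_mul_assoc,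
          Ring.inverse_mul_cancel_left _ _ hD]

theorem exchange_identity_inverse_one_sub {b : S} (hb : IsUnit (1 - b))
    (hmb : m * b = q • (b * m)) (hmy : m * y = q • (y * m))
    (hby : b * y = q • (y * b) + (1 - q) • (b * b)) :
    m - m * (1 - b)⁻¹ʳ - (1 - b)⁻¹ʳ * m * y
      = q • (m - (1 - b)⁻¹ʳ * m - y * m * (1 - b)⁻¹ʳ) := by
  have hbym : b * (y * m) = q • (y * (b * m)) + (1 - q) • (b * (b * m)) := by
    rw [← mul_assoc, hby]
    simp only [add_mul, smul_mul_assoc, mul_assoc]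
  have cleared : (1 - b) * m * (1 - b) - (1 - b) * m - m * y * (1 - b)
      = q • ((1 - b) * m * (1 - b) - m * (1 - b) - (1 - b) * y * m) := by
    simp only [mul_sub, sub_mul, smul_mul_assoc, mul_smul_comm, mul_assoc, one_mul, mul_one, hmb,
      hmy, hbym]
    module
  have key := congrArg (fun x => (1 - b)⁻¹ʳ * x * (1 - b)⁻¹ʳ) cleared
  generalize 1 - b = Q at hb key
  simp only [mul_sub, sub_mul, smul_mul_assoc, mul_smul_comm, mul_assoc,
    Ring.inverse_mul_cancel_left _ _ hb, Ring.mul_inverse_cancel _ hb, mul_one] at key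
  simpa only [mul_assoc] using key

theorem exchange_identity_fraction (hD : IsUnit D) (hF : IsUnit (1 - D⁻¹ʳ * y))
    (hmD : Commute m D) (hmy : m * y = q • (y * m)) (hyD : y * D = q • (D * y) + (1 - q) • y) :
    m * m - m * ((1 - D⁻¹ʳ * y)⁻¹ʳ * m) - (1 - D⁻¹ʳ * y)⁻¹ʳ * m * (y * m)
      = q • (m * m - (1 - D⁻¹ʳ * y)⁻¹ʳ * m * m - y * m * ((1 - D⁻¹ʳ * y)⁻¹ʳ * m)) := by
  have hmb : m * (D⁻¹ʳ * y) = q • (D⁻¹ʳ * y * m) := by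
    rw [← mul_assoc, (commute_ringInverse_right hmD).eq, mul_assoc, hmy, mul_smul_comm, mul_assoc]
  have hby : D⁻¹ʳ * y * y = q • (y * (D⁻¹ʳ * y)) + (1 - q) • (D⁻¹ʳ * y * (D⁻¹ʳ * y)) := by
    nth_rw 1 [inverse_mul_eq_of_mul_eq hD hyD]
    simp only [add_mul, smul_mul_assoc, mul_assoc]
  have key := congrArg (· * m) (exchange_identity_inverse_one_sub hF hmb hmy hby)
  simpa only [sub_mul, smul_mul_assoc, mul_assoc] using key

end ExchangeIdentity

section GeneratingFunction

open PowerSeries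

variable {R : Type*} [Ring R]

theorem isUnit_one_sub_mul_X_mul_C (f : R⟦X⟧) (a : R) : IsUnit (1 - f * (X * C a)) := by
  rw [isUnit_iff_constantCoeff]
  simp

theorem mul_C_eq_mk_of_eq_one_add {f : ℤ → R⟦X⟧} {y m : ℤ → R}
    (hf : ∀ n, f n = 1 + f (n + 1) * (X * C (y n))) (hm : ∀ n, y n * m n = m (n + 1)) (n : ℤ) :
    f n * C (m n) = mk fun k => m (n + k) := by
  have hfm : ∀ n, f n * C (m n) = C (m n) + X * (f (n + 1) * C (m (n + 1))) := fun n => by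
    rw [← hm n, hf n, map_mul, add_mul, one_mul, ← mul_assoc (f (n + 1)), ← X_mul]
    simp only [mul_assoc]
  ext k
  induction k generalizing n with
  | zero => rw [hfm]; simp
  | succ k ih =>
    rw [hfm, map_add, coeff_C, if_neg k.succ_ne_zero, coeff_succ_X_mul, ih, coeff_mk, coeff_mk,
      zero_add, Nat.cast_succ, add_right_comm, add_assoc n]

end GeneratingFunction

section QuantumMSystem

variable {K R : Type*} [CommRing K] [Ring R] [Algebra K R]

/-- The quantum M-system of type `A_r` with its quasi-commutation relations. Only the levels
`α ≤ r + 1` of `U` matter; the vanishing of level `r + 2` is built into `exchange_top`. -/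
structure IsQuantumMSystem (q : Kˣ) (r : ℕ) (U : ℕ → ℤ → Rˣ) : Prop where
  level_zero : ∀ n, U 0 n = 1
  exchange : ∀ α < r, ∀ n,
    q ^ (α + 1) • (U (α + 1) (n + 1) * U (α + 1) (n - 1) : R)
      = U (α + 1) n ^ 2 - U (α + 2) n * U α n
  exchange_top : ∀ n,
    q ^ (r + 1) • (U (r + 1) (n + 1) * U (r + 1) (n - 1) : R) = U (r + 1) n ^ 2
  qCommute : ∀ ⦃α⦄, α ≤ r + 1 → ∀ ⦃β⦄, β ≤ r + 1 → ∀ ⦃s t : ℤ⦄,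
    (t - s).natAbs ≤ ((β : ℤ) - α).natAbs + 1 →
      QCommute q ((t - s) * (min α β : ℕ)) (U α s : R) (U β t)

/-- The ratio `ξ_{α,n} = U_{α,n+1} U_{α,n}⁻¹` of neighbours in `n`, from which the weights of the
continued fraction are built. -/
def timeRatio (U : ℕ → ℤ → Rˣ) (α : ℕ) (n : ℤ) : Rˣ :=
  U α (n + 1) * (U α n)⁻¹

/-- The ratio `ρ_{α,n} = U_{α+1,n} U_{α,n}⁻¹` of neighbours in `α`, in terms of which the M-system
is additive. -/
def levelRatio (U : ℕ → ℤ → Rˣ) (α : ℕ) (n : ℤ) : Rˣ :=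
  U (α + 1) n * (U α n)⁻¹

/-- The weights `o_j(n) = ξ_{j+1,n+j} ξ_{j,n+j-1}⁻¹` of the continued fraction attached to `n`. -/
def oddWeight (U : ℕ → ℤ → Rˣ) (n : ℤ) (j : ℕ) : R :=
  timeRatio U (j + 1) (n + j) * ((timeRatio U j (n + j - 1))⁻¹ : Rˣ)

/-- The weights `e_j(n) = ξ_{j+1,n+j-1} (ξ_{j,n+j-2}⁻¹ - ξ_{j,n+j-1}⁻¹)` of the continued fraction
attached to `n`. They vanish at `j = 0` and at `j = r + 1`, the latter whatever the junk value of
`U (r + 2)` is. -/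
def evenWeight (U : ℕ → ℤ → Rˣ) (n : ℤ) (j : ℕ) : R :=
  timeRatio U (j + 1) (n + j - 1)
    * (((timeRatio U j (n + j - 2))⁻¹ : Rˣ) - ((timeRatio U j (n + j - 1))⁻¹ : Rˣ))

theorem oddWeight_add_one (U : ℕ → ℤ → Rˣ) (n : ℤ) (j : ℕ) :
    oddWeight U (n + 1) j
      = timeRatio U (j + 1) (n + j + 1) * ((timeRatio U j (n + j))⁻¹ : Rˣ) := by
  rw [oddWeight, add_right_comm, add_sub_cancel_right]

theorem oddWeight_succ (U : ℕ → ℤ → Rˣ) (n : ℤ) (j : ℕ) :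
    oddWeight U n (j + 1)
      = timeRatio U (j + 2) (n + j + 1) * ((timeRatio U (j + 1) (n + j))⁻¹ : Rˣ) := by
  rw [oddWeight, Nat.cast_succ, ← add_assoc, add_sub_cancel_right]

theorem evenWeight_add_one (U : ℕ → ℤ → Rˣ) (n : ℤ) (j : ℕ) :
    evenWeight U (n + 1) j = timeRatio U (j + 1) (n + j)
      * (((timeRatio U j (n + j - 1))⁻¹ : Rˣ) - ((timeRatio U j (n + j))⁻¹ : Rˣ)) := by
  have index_shift : n + 1 + j - 2 = n + j - 1 := by lia
  rw [evenWeight, index_shift, add_right_comm, add_sub_cancel_right]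

theorem evenWeight_succ (U : ℕ → ℤ → Rˣ) (n : ℤ) (j : ℕ) :
    evenWeight U n (j + 1) = timeRatio U (j + 2) (n + j)
      * (((timeRatio U (j + 1) (n + j - 1))⁻¹ : Rˣ) - ((timeRatio U (j + 1) (n + j))⁻¹ : Rˣ)) := by
  have index_shift : n + (j + 1 : ℕ) - 2 = n + j - 1 := by lia
  rw [evenWeight, index_shift, Nat.cast_succ, ← add_assoc, add_sub_cancel_right]

namespace IsQuantumMSystem

variable {q : Kˣ} {r : ℕ} {U : ℕ → ℤ → Rˣ}

theorem commute (h : IsQuantumMSystem q r U) {α β : ℕ} (hα : α ≤ r + 1) (hβ : β ≤ r + 1)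
    (n : ℤ) : Commute (U α n : R) (U β n) :=
  ((h.qCommute hα hβ (by lia)).of_eq (by ring)).commute

theorem qCommute_add_one (h : IsQuantumMSystem q r U) {α β : ℕ} (hα : α ≤ r + 1)
    (hβ : β ≤ r + 1) (n : ℤ) : QCommute q (min α β : ℕ) (U α n : R) (U β (n + 1)) :=
  (h.qCommute hα hβ (by lia)).of_eq (by ring)

theorem timeRatio_zero (h : IsQuantumMSystem q r U) (n : ℤ) : timeRatio U 0 n = 1 := by
  rw [timeRatio, h.level_zero, h.level_zero, inv_one, one_mul]

theorem levelRatio_zero (h : IsQuantumMSystem q r U) (n : ℤ) : levelRatio U 0 n = U 1 n := by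
  rw [levelRatio, h.level_zero, inv_one, mul_one, zero_add]

theorem timeRatio_succ_mul_inv (h : IsQuantumMSystem q r U) {α : ℕ} (hα : α ≤ r + 1) (n : ℤ) :
    ((timeRatio U α (n + 1) * (timeRatio U α n)⁻¹ : Rˣ) : R)
      = q ^ α • (U α (n + 1 + 1) * U α n : R) * ((U α (n + 1))⁻¹ : Rˣ)
        * ((U α (n + 1))⁻¹ : Rˣ) := by
  have hcomm : QCommute q α (((U α (n + 1))⁻¹ : Rˣ) : R) (U α n) :=
    (h.qCommute_add_one hα hα n).symm.units_inv_left.of_eq (by simp)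
  simp only [timeRatio, mul_inv_rev, inv_inv, Units.val_mul, mul_assoc, smul_mul_assoc]
  rw [← mul_assoc (((U α (n + 1))⁻¹ : Rˣ) : R), hcomm, zpow_natCast, smul_mul_assoc,
    mul_smul_comm, mul_assoc]

theorem timeRatio_top_add_one (h : IsQuantumMSystem q r U) (n : ℤ) :
    timeRatio U (r + 1) (n + 1) = timeRatio U (r + 1) n := by
  have step := h.exchange_top (n + 1)
  rw [add_sub_cancel_right] at step
  rw [← mul_inv_eq_one]
  ext
  rw [h.timeRatio_succ_mul_inv le_rfl, step, sq, Units.mul_inv_cancel_right, Units.mul_inv,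
    Units.val_one]

theorem levelRatio_succ_mul_inv (h : IsQuantumMSystem q r U) {j : ℕ} (hj : j ≤ r) (n : ℤ) :
    levelRatio U j (n + 1) * (levelRatio U j n)⁻¹
      = timeRatio U (j + 1) n * (timeRatio U j n)⁻¹ := by
  have hlevels : Commute (U j n) (U (j + 1) n) :=
    Units.val_injective (h.commute (by lia) (by lia) n)
  have hweight : QCommute q 0 (U j (n + 1) : R) ((U j n * (U (j + 1) n)⁻¹ : Rˣ) : R) := by
    rw [Units.val_mul]
    exact ((h.qCommute_add_one (by lia) (by lia) n).symm.mul_right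
      (h.qCommute_add_one (by lia) (by lia) n).symm.units_inv_right).of_eq (by simp)
  have hcomm : Commute (U j (n + 1)) (U j n * (U (j + 1) n)⁻¹) :=
    Units.val_injective hweight.commute
  calc levelRatio U j (n + 1) * (levelRatio U j n)⁻¹
      = U (j + 1) (n + 1) * ((U j (n + 1))⁻¹ * (U j n * (U (j + 1) n)⁻¹)) := by
        simp only [levelRatio, mul_inv_rev, inv_inv, mul_assoc]
    _ = U (j + 1) (n + 1) * ((U (j + 1) n)⁻¹ * U j n * (U j (n + 1))⁻¹) := by
        rw [hcomm.inv_left.eq, hlevels.inv_right.eq]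
    _ = timeRatio U (j + 1) n * (timeRatio U j n)⁻¹ := by
        simp only [timeRatio, mul_inv_rev, inv_inv, mul_assoc]

theorem timeRatio_mul_inv_add_levelRatio_mul_inv (h : IsQuantumMSystem q r U) {α : ℕ}
    (hα : α < r) (n : ℤ) :
    ((timeRatio U (α + 1) (n + 1) * (timeRatio U (α + 1) n)⁻¹ : Rˣ) : R)
      + (levelRatio U (α + 1) (n + 1) * (levelRatio U α (n + 1))⁻¹ : Rˣ) = 1 := by
  set u := U (α + 1) (n + 1)
  have hcomm : Commute ((u⁻¹ : Rˣ) : R) (U α (n + 1)) :=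
    (h.commute (by lia) (by lia) (n + 1)).units_inv_left
  have hlevel : ((levelRatio U (α + 1) (n + 1) * (levelRatio U α (n + 1))⁻¹ : Rˣ) : R)
      = U (α + 2) (n + 1) * U α (n + 1) * (u⁻¹ : Rˣ) * (u⁻¹ : Rˣ) := by
    simp only [levelRatio, mul_inv_rev, inv_inv, Units.val_mul, mul_assoc]
    rw [← mul_assoc ((u⁻¹ : Rˣ) : R), hcomm.eq, mul_assoc]
  have step := h.exchange α hα (n + 1)
  rw [add_sub_cancel_right] at step
  rw [h.timeRatio_succ_mul_inv (by lia), hlevel, ← add_mul, ← add_mul, step, sub_add_cancel, sq,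
    Units.mul_inv_cancel_right, Units.mul_inv]

theorem evenWeight_zero (h : IsQuantumMSystem q r U) (n : ℤ) : evenWeight U n 0 = 0 := by
  rw [evenWeight, h.timeRatio_zero, h.timeRatio_zero, sub_self, mul_zero]

theorem evenWeight_top (h : IsQuantumMSystem q r U) (n : ℤ) : evenWeight U n (r + 1) = 0 := by
  have constant := h.timeRatio_top_add_one (n + r - 1)
  rw [sub_add_cancel] at constant
  rw [evenWeight_succ, constant, sub_self, mul_zero]

theorem evenWeight_succ_eq_neg_levelRatio (h : IsQuantumMSystem q r U) {j : ℕ} (hj : j < r)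
    (n : ℤ) :
    evenWeight U n (j + 1)
      = -((levelRatio U (j + 1) (n + j + 1) * (levelRatio U j (n + j))⁻¹ : Rˣ) : R) := by
  have unity := h.timeRatio_mul_inv_add_levelRatio_mul_inv hj (n + j - 1)
  rw [sub_add_cancel] at unity
  have flat := h.levelRatio_succ_mul_inv (j := j + 1) hj (n + j)
  have hdiff : (((timeRatio U (j + 1) (n + j - 1))⁻¹ : Rˣ) : R)
        - ((timeRatio U (j + 1) (n + j))⁻¹ : Rˣ)
      = -(((timeRatio U (j + 1) (n + j))⁻¹
          * (levelRatio U (j + 1) (n + j) * (levelRatio U j (n + j))⁻¹) : Rˣ) : R) := by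
    rw [Units.val_mul, eq_sub_of_add_eq' unity, mul_sub, mul_one, neg_sub, Units.val_mul,
      Units.inv_mul_cancel_left]
  rw [evenWeight_succ, hdiff, mul_neg, ← Units.val_mul, ← mul_assoc, ← flat, ← mul_assoc,
    inv_mul_cancel_right]

theorem evenWeight_succ_eq_sub_mul_inv (h : IsQuantumMSystem q r U) {j : ℕ} (hj : j ≤ r)
    (n : ℤ) :
    evenWeight U n (j + 1)
      = ((timeRatio U (j + 1) (n + j + 1) : R) - timeRatio U (j + 1) (n + j))
        * ((timeRatio U j (n + j))⁻¹ : Rˣ) := by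
  obtain hj | rfl := hj.lt_or_eq
  · have unity := h.timeRatio_mul_inv_add_levelRatio_mul_inv hj (n + j)
    have flat := h.levelRatio_succ_mul_inv hj.le (n + j)
    have hdiff : (timeRatio U (j + 1) (n + j + 1) : R) - timeRatio U (j + 1) (n + j)
        = -((levelRatio U (j + 1) (n + j + 1) * (levelRatio U j (n + j + 1))⁻¹
            * timeRatio U (j + 1) (n + j) : Rˣ) : R) := by
      rw [Units.val_mul, eq_sub_of_add_eq' unity, sub_mul, one_mul, neg_sub, ← Units.val_mul,
        inv_mul_cancel_right]
    rw [h.evenWeight_succ_eq_neg_levelRatio hj, hdiff, neg_mul, ← Units.val_mul, mul_assoc, ← flat,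
      ← mul_assoc, inv_mul_cancel_right]
  · rw [h.evenWeight_top, h.timeRatio_top_add_one, sub_self, zero_mul]

theorem oddWeight_add_evenWeight (h : IsQuantumMSystem q r U) (n : ℤ) {j : ℕ} (hj : j ≤ r) :
    oddWeight U n j + evenWeight U n (j + 1) = evenWeight U (n + 1) j + oddWeight U (n + 1) j := by
  rw [h.evenWeight_succ_eq_sub_mul_inv hj, oddWeight, evenWeight_add_one, oddWeight_add_one,
    mul_sub, sub_mul]
  abel

theorem evenWeight_mul_oddWeight (h : IsQuantumMSystem q r U) (n : ℤ) {j : ℕ} (hj : j ≤ r) :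
    evenWeight U (n + 1) (j + 1) * oddWeight U (n + 1) j
      = oddWeight U n (j + 1) * evenWeight U n (j + 1) := by
  have index_shift : n + (j + 1 : ℕ) = n + j + 1 := by lia
  rw [evenWeight_add_one, h.evenWeight_succ_eq_sub_mul_inv hj, index_shift, add_sub_cancel_right,
    oddWeight_add_one, oddWeight_succ]
  simp only [mul_sub, sub_mul, mul_assoc, Units.inv_mul_cancel_left]

theorem qCommute_timeRatio (h : IsQuantumMSystem q r U) {α : ℕ} (hα : 1 ≤ α) (hα' : α ≤ r + 1)
    {s t : ℤ} (hst : (t - s).natAbs ≤ α) (hst' : (t + 1 - s).natAbs ≤ α) :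
    QCommute q 1 (U 1 s : R) (timeRatio U α t) := by
  rw [timeRatio, Units.val_mul]
  exact ((h.qCommute (by lia) hα' (by lia)).mul_right
    (h.qCommute (by lia) hα' (by lia)).units_inv_right).of_eq (by rw [min_eq_left hα]; ring)

theorem commute_levelRatio (h : IsQuantumMSystem q r U) {α : ℕ} (hα : 1 ≤ α) (hα' : α ≤ r)
    {s t : ℤ} (hst : (t - s).natAbs ≤ α) :
    Commute (U 1 s : R) (levelRatio U α t) := by
  rw [levelRatio, Units.val_mul]
  exact (((h.qCommute (by lia) (by lia) (by lia)).mul_right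
    (h.qCommute (by lia) (by lia) (by lia)).units_inv_right).of_eq
      (by rw [min_eq_left hα, min_eq_left (by lia)]; ring)).commute

theorem commute_oddWeight_succ (h : IsQuantumMSystem q r U) {j : ℕ} (hj : j < r) {n s : ℤ}
    (hns : n ≤ s) (hsn : s ≤ n + 1) : Commute (U 1 s : R) (oddWeight U n (j + 1)) := by
  rw [oddWeight_succ]
  exact (((h.qCommute_timeRatio (by lia) (by lia) (by lia) (by lia)).mul_right
    (h.qCommute_timeRatio (by lia) (by lia) (by lia) (by lia)).units_inv_right).of_eq
      (by ring)).commute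

theorem commute_evenWeight_succ (h : IsQuantumMSystem q r U) {j : ℕ} (hj : 1 ≤ j) (hjr : j < r)
    {n s : ℤ} (hns : n ≤ s) (hsn : s ≤ n + 1) :
    Commute (U 1 s : R) (evenWeight U n (j + 1)) := by
  rw [h.evenWeight_succ_eq_neg_levelRatio hjr, Units.val_mul]
  exact ((h.commute_levelRatio (by lia) (by lia) (by lia)).mul_right
    (h.commute_levelRatio hj (by lia) (by lia)).units_inv_right).neg_right

theorem qCommute_evenWeight_one (h : IsQuantumMSystem q r U) (hr : 1 ≤ r) {n s : ℤ} (hns : n ≤ s)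
    (hsn : s ≤ n + 1) : QCommute q (s - n) (U 1 s : R) (evenWeight U n 1) := by
  rw [h.evenWeight_succ_eq_neg_levelRatio hr, h.levelRatio_zero, Units.val_mul]
  have head := h.commute_levelRatio (s := s) (t := n + (0 : ℕ) + 1) le_rfl hr (by lia)
  have tail := h.qCommute (α := 1) (β := 1) (s := s) (t := n + (0 : ℕ)) (by lia) (by lia) (by lia)
  exact ((QCommute.of_commute head).mul_right tail.units_inv_right).neg_right.of_eq (by simp)

end IsQuantumMSystem

end QuantumMSystem

section CurrentFraction

open PowerSeries

variable {K R : Type*} [CommRing K] [Ring R] [Algebra K R] {q : Kˣ} {r : ℕ} {U : ℕ → ℤ → Rˣ}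

theorem commute_C_X_mul_C {a b : R} (h : Commute a b) : Commute (C a) (X * C b) :=
  (commute_X (C a)).mul_right (h.map C)

theorem QCommute.C_X_mul_C {w : ℤ} {a b : R} (h : QCommute q w a b) :
    QCommute q w (C a) (X * C b) := by
  have hC : C a * C b = q ^ w • (C b * C a) := by
    rw [← map_mul, h, ← map_mul]
    ext k
    simp [coeff_C, Units.smul_def]
  rw [QCommute, ← mul_assoc, (commute_X (C a)).eq, mul_assoc, hC, mul_smul_comm, mul_assoc]

/-- The Stieltjes continued fraction with weights `X o_0, X e_1, X o_1, …, X e_r, X o_r`. Its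
product with `U 1 n` is the generating function of the current. -/
noncomputable def currentFraction (U : ℕ → ℤ → Rˣ) (r : ℕ) (n : ℤ) : R⟦X⟧ :=
  oddFraction (fun j => X * C (evenWeight U n j)) (fun j => X * C (oddWeight U n j)) r 0

namespace IsQuantumMSystem

theorem oddWeight_zero (h : IsQuantumMSystem q r U) (n : ℤ) :
    oddWeight U n 0 = timeRatio U 1 n := by
  rw [oddWeight, h.timeRatio_zero]
  simp

theorem currentFraction_eq_one_add (h : IsQuantumMSystem q r U) (n : ℤ) :
    currentFraction U r n = 1 + currentFraction U r (n + 1) * (X * C (timeRatio U 1 n : R)) := by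
  have X_mul_C_mul (a b : R) : X * C a * (X * C b) = X * X * C (a * b) := by
    rw [mul_assoc, ← mul_assoc (C a), (commute_X (C a)).eq, mul_assoc, ← map_mul, mul_assoc]
  rw [← h.oddWeight_zero]
  refine oddFraction_eq_one_add_of_rhombus (fun _ _ => isUnit_one_sub_mul_X_mul_C _ _)
    (fun _ _ => isUnit_one_sub_mul_X_mul_C _ _) (fun _ _ => isUnit_one_sub_mul_X_mul_C _ _)
    (fun _ _ => isUnit_one_sub_mul_X_mul_C _ _) (fun j hj => ?_) (fun j hj => ?_) ?_ ?_
  · rw [← mul_add, ← map_add, h.oddWeight_add_evenWeight n hj, map_add, mul_add]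
  · rw [X_mul_C_mul, h.evenWeight_mul_oddWeight n hj.le, X_mul_C_mul]
  · rw [h.evenWeight_top, map_zero, mul_zero]
  · rw [h.evenWeight_zero, map_zero, mul_zero]

theorem currentFraction_mul_C (h : IsQuantumMSystem q r U) (n : ℤ) :
    currentFraction U r n * C (U 1 n : R) = PowerSeries.mk fun k => (U 1 (n + k) : R) :=
  mul_C_eq_mk_of_eq_one_add (m := fun n => (U 1 n : R)) h.currentFraction_eq_one_add
    (fun n => by rw [timeRatio, Units.val_mul, Units.inv_mul_cancel_right]) n

theorem commute_oddFraction_one (h : IsQuantumMSystem q (r + 1) U) {n s : ℤ} (hns : n ≤ s)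
    (hsn : s ≤ n + 1) :
    Commute (C (U 1 s : R)) (oddFraction (fun j => X * C (evenWeight U n j))
      (fun j => X * C (oddWeight U n j)) r 1) := by
  have odd (i : ℕ) (hi : 1 ≤ i) (hir : i ≤ r + 1) : Commute (U 1 s : R) (oddWeight U n i) := by
    obtain ⟨j, rfl⟩ := Nat.exists_eq_add_of_le' hi
    exact h.commute_oddWeight_succ hir hns hsn
  have even (i : ℕ) (hi : 2 ≤ i) (hir : i ≤ r + 1) : Commute (U 1 s : R) (evenWeight U n i) := by
    obtain ⟨j, rfl⟩ := Nat.exists_eq_add_of_le' hi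
    exact h.commute_evenWeight_succ (by lia) (by lia) hns hsn
  exact commute_oddFraction
    (commute_evenFraction (fun i hi hir => commute_C_X_mul_C (even i hi (by lia)))
      fun i hi hir => commute_C_X_mul_C (odd i (by lia) (by lia)))
    (commute_C_X_mul_C (odd 1 le_rfl (by lia)))

theorem qCommute_timeRatio_one (h : IsQuantumMSystem q r U) (n : ℤ) :
    QCommute q 1 (U 1 n : R) (timeRatio U 1 n) :=
  h.qCommute_timeRatio le_rfl (by lia) (by lia) (by lia)

theorem qCommute_timeRatio_evenWeight (h : IsQuantumMSystem q r U) (hr : 1 ≤ r) (n : ℤ) :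
    QCommute q 1 (timeRatio U 1 n : R) (evenWeight U n 1) := by
  rw [timeRatio, Units.val_mul]
  exact ((h.qCommute_evenWeight_one hr (by lia) le_rfl).mul_left
    (h.qCommute_evenWeight_one hr le_rfl (by lia)).units_inv_left).of_eq (by ring)

theorem exists_currentFraction_eq (h : IsQuantumMSystem q r U) (n : ℤ) :
    ∃ D : R⟦X⟧, IsUnit D ∧ Commute (C (U 1 n : R)) D ∧
      X * C (timeRatio U 1 n : R) * D
        = (q : K) • (D * (X * C (timeRatio U 1 n : R)))
          + (1 - (q : K)) • (X * C (timeRatio U 1 n : R)) ∧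
      currentFraction U r n = (1 - D⁻¹ʳ * (X * C (timeRatio U 1 n : R)))⁻¹ʳ := by
  obtain _ | r := r
  · refine ⟨1, isUnit_one, Commute.one_right _, by rw [mul_one, one_mul]; module, ?_⟩
    rw [currentFraction, oddFraction, evenFraction, h.oddWeight_zero, Ring.inverse_one]
  set G := oddFraction (fun j => X * C (evenWeight U n j)) (fun j => X * C (oddWeight U n j)) r 1
  have hmG : Commute (C (U 1 n : R)) G := h.commute_oddFraction_one le_rfl (by lia)
  have hm'G : Commute (C (U 1 (n + 1) : R)) G := h.commute_oddFraction_one (by lia) le_rfl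
  have hyG : Commute (X * C (timeRatio U 1 n : R)) G := by
    rw [timeRatio, Units.val_mul, map_mul]
    exact (commute_X G).symm.mul_left
      (hm'G.mul_left (Commute.units_inv_left (u := Units.map (C (R := R)).toMonoidHom (U 1 n)) hmG))
  have hme : Commute (C (U 1 n : R)) (X * C (evenWeight U n 1)) :=
    commute_C_X_mul_C ((h.qCommute_evenWeight_one (by lia) le_rfl (by lia)).of_eq
      (sub_self n)).commute
  have hye : QCommute q 1 (X * C (timeRatio U 1 n : R)) (X * C (evenWeight U n 1)) :=
    ((QCommute.of_commute (commute_X _).symm).mul_left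
      (h.qCommute_timeRatio_evenWeight (by lia) n).C_X_mul_C).of_eq (zero_add 1)
  refine ⟨1 - G * (X * C (evenWeight U n 1)), isUnit_one_sub_mul_X_mul_C _ _,
    (Commute.one_right _).sub_right (hmG.mul_right hme), mul_one_sub_mul_eq hyG hye.mul_eq_smul, ?_⟩
  rw [currentFraction, oddFraction, evenFraction_succ, h.oddWeight_zero]

theorem exchange_relation (h : IsQuantumMSystem q r U) (n : ℤ) {p : ℤ} (hp : 1 ≤ p) :
    (U 1 n * U 1 (n + p) + U 1 (n + p - 1) * U 1 (n + 1) : R)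
      = (q : K) • (U 1 (n + p) * U 1 n + U 1 (n + 1) * U 1 (n + p - 1) : R) := by
  obtain ⟨k, rfl⟩ : ∃ k : ℕ, p = (k + 1 : ℕ) := ⟨(p - 1).toNat, by lia⟩
  have index_shift : n + (k + 1 : ℕ) - 1 = n + k := by lia
  rw [index_shift]
  obtain ⟨D, hD, hmD, hyD, hF⟩ := h.exists_currentFraction_eq n
  have hmy : C (U 1 n : R) * (X * C (timeRatio U 1 n : R))
      = (q : K) • (X * C (timeRatio U 1 n : R) * C (U 1 n : R)) :=
    (h.qCommute_timeRatio_one n).C_X_mul_C.mul_eq_smul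
  have hym : X * C (timeRatio U 1 n : R) * C (U 1 n : R) = X * C (U 1 (n + 1) : R) := by
    rw [mul_assoc, ← map_mul, timeRatio, Units.val_mul, Units.inv_mul_cancel_right]
  have generating := exchange_identity_fraction hD (isUnit_one_sub_mul_X_mul_C _ _) hmD hmy hyD
  rw [← hF, h.currentFraction_mul_C, hym, ← mul_assoc _ X, mul_assoc X] at generating
  have coeff_succ := congrArg (coeff (k + 1)) generating
  simpa only [map_sub, coeff_smul, coeff_C_mul, coeff_mul_C, coeff_C, if_neg k.succ_ne_zero,
    coeff_mk, coeff_succ_X_mul, coeff_succ_mul_X, zero_mul, zero_sub, ← neg_add', smul_neg,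
    neg_inj] using coeff_succ

end IsQuantumMSystem

end CurrentFraction

theorem exists_units_center_map_eq {R : Type*} [Ring R] (q : Rˣ) (hq : ∀ x : R, q * x = x * q) :
    ∃ c : (Subring.center R)ˣ, Units.map (Subring.center R).subtype.toMonoidHom c = q := by
  have hmem : (q : R) ∈ Subring.center R := Subring.mem_center_iff.2 fun x => (hq x).symm
  exact ⟨⟨⟨q, hmem⟩, ⟨_, Set.units_inv_mem_center hmem⟩, Subtype.ext q.mul_inv,
    Subtype.ext q.inv_mul⟩, Units.ext rfl⟩

theorem quantum_Q_exchange_relations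
    {R : Type*} [Ring R] (q A Δ : Rˣ)
    (hq : ∀ x : R, (q : R) * x = x * (q : R))
    (r : ℕ) (hr : 1 ≤ r)
    (M Mi : ℕ → ℤ → R)
    (hM0 : ∀ n : ℤ, M 0 n = 1)
    (hMtop : ∀ n : ℤ, M (r + 2) n = 0)
    (hMiL : ∀ (α : ℕ) (n : ℤ), α ≤ r + 1 → M α n * Mi α n = 1)
    (hMiR : ∀ (α : ℕ) (n : ℤ), α ≤ r + 1 → Mi α n * M α n = 1)
    (hMsys : ∀ (α : ℕ) (n : ℤ), 1 ≤ α → α ≤ r + 1 →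
      (q : R) ^ α * M α (n + 1) * M α (n - 1) = M α n ^ 2 - M (α + 1) n * M (α - 1) n)
    (hcom : ∀ (α β ε : ℕ) (n : ℤ), ε ≤ 1 → α ≤ r + 1 → β ≤ r + 1 →
      M α n * M β (n + (ε : ℤ)) = (q : R) ^ (ε * min α β) * M β (n + (ε : ℤ)) * M α n)
    (hAΔ : ∀ n : ℤ, M (r + 1) n = ((A ^ n : Rˣ) : R) * (Δ : R))
    (hΔM : ∀ (α : ℕ) (n : ℤ), 1 ≤ α → α ≤ r + 1 →
      (Δ : R) * M α n = ((q ^ ((α : ℤ) * n) : Rˣ) : R) * M α n * (Δ : R))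
    (hAM : ∀ (α : ℕ) (n : ℤ), 1 ≤ α → α ≤ r + 1 →
      (A : R) * M α n = ((q ^ (-(α : ℤ)) : Rˣ) : R) * M α n * (A : R))
    (hΔA : (Δ : R) * (A : R) = (q : R) ^ (r + 1) * (A : R) * (Δ : R))
    (hext : ∀ (α β : ℕ) (n p : ℤ), α ≤ r + 1 → β ≤ r + 1 →
      |p| ≤ |(β : ℤ) - (α : ℤ)| + 1 →
      M α n * M β (n + p) = ((q ^ (p * ((min α β : ℕ) : ℤ)) : Rˣ) : R) * M β (n + p) * M α n) :
    ∀ n p : ℤ, 1 ≤ p →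
      M 1 n * M 1 (n + p) - (q : R) * M 1 (n + p) * M 1 n
        + M 1 (n + p - 1) * M 1 (n + 1) - (q : R) * M 1 (n + 1) * M 1 (n + p - 1) = 0 := by
  obtain ⟨c, rfl⟩ := exists_units_center_map_eq q hq
  let U (α : ℕ) (n : ℤ) : Rˣ :=
    if hα : α ≤ r + 1 then ⟨M α n, Mi α n, hMiL α n hα, hMiR α n hα⟩ else 1
  have hU {α : ℕ} (hα : α ≤ r + 1) (n : ℤ) : (U α n : R) = M α n := by simp only [U, dif_pos hα]
  have hMsystem : IsQuantumMSystem c r U :=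
    { level_zero := fun n => Units.ext ((hU (by lia) n).trans (hM0 n))
      exchange := fun α hα n => by
        rw [hU (by lia), hU (by lia), hU (by lia), hU (by lia), hU (by lia)]
        exact (mul_assoc _ _ _).symm.trans (hMsys (α + 1) n (by lia) (by lia))
      exchange_top := fun n => by
        have top := hMsys (r + 1) n (by lia) le_rfl
        rw [hMtop, zero_mul, sub_zero, mul_assoc] at top
        rwa [hU le_rfl, hU le_rfl, hU le_rfl]
      qCommute := fun α hα β hβ s t hst => by
        have weight := hext α β s (t - s) hα hβ (by rw [Int.abs_eq_natAbs, Int.abs_eq_natAbs]; lia)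
        rw [add_sub_cancel, ← map_zpow, mul_assoc] at weight
        rwa [hU hα, hU hβ] }
  intro n p hp
  have relation := hMsystem.exchange_relation n hp
  rw [hU (by lia), hU (by lia), hU (by lia), hU (by lia)] at relation
  rw [sub_add_eq_add_sub, sub_sub, mul_assoc, mul_assoc, ← mul_add]
  exact sub_eq_zero.2 relation
end

section
/- Under these hypotheses the generators M_n = M_{1,n} satisfy the symmetrized cubic relation: for all n,p,k ∈ ℤ, the sum over the six permutations (a,b,c) of the triple (n,p,k) of the double commutators [M_a, [M_{b-1}, M_{c+1}]] vanishes, where [x,y] := xy − yx. -/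
/-!
Write `f = M 1`. Once `q` is introduced as a parameter, the symmetrized double commutator becomes a
linear combination of products of a value of `f` with a defect `E a b` of the quadratic exchange
relation `f a * f (b + 1) - q f (a + 1) * f b = q f (b + 1) * f a - f b * f (a + 1)`, so it suffices
that all these defects vanish. This is shown by induction on `|b - a|`.

The `M α n` play the role of Toeplitz minors of `f`: by the `M`-system, there is a polynomial `P` of
degree `α` with constant coefficient `M α (n - 1)` whose convolution with `f` vanishes on the window
`n, …, n + α - 1` and takes values proportional to `M (α + 1) (n - 1)` and `M (α + 1) n` at its two
neighbours. Let `u = q f a - X f (a + 1)`. Convolving with `u` amounts to the left operation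
`f b ↦ f a * f b - q f (a + 1) * f (b - 1)` up to the defects `E a (b - 1)`. If these vanish near
the window, then the products `u * P` and `P * u`, the latter scaled by a power of `q`, have equal
coefficients in degrees `0` and `α + 1` and equal convolutions on the window, so they agree by
Toeplitz nondegeneracy. Comparing their convolutions one step past the window gives the next defect.
-/

open Polynomial
open scoped Ring

section SeqConv

variable {R : Type*} [Ring R]

/-- The right action of polynomials on two-sided sequences, with `X` acting as the backward shift:
`seqConv f p m = ∑ j, f (m - j) * p.coeff j`. -/
noncomputable def seqConv (f : ℤ → R) : R[X] →ₗ[ℤ] ℤ → R :=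
  lsum fun j => LinearMap.pi fun m => LinearMap.mulLeft ℤ (f (m - j))

lemma seqConv_apply (f : ℤ → R) (p : R[X]) (m : ℤ) :
    seqConv f p m = p.sum fun j c => f (m - j) * c := by
  simp [seqConv, lsum_apply, Polynomial.sum]

lemma seqConv_monomial (f : ℤ → R) (j : ℕ) (c : R) (m : ℤ) :
    seqConv f (monomial j c) m = f (m - j) * c := by
  rw [seqConv_apply, sum_monomial_index c _ (mul_zero _)]

lemma seqConv_C (f : ℤ → R) (c : R) (m : ℤ) : seqConv f (C c) m = f m * c := by
  simpa using seqConv_monomial f 0 c m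

lemma seqConv_X_mul (f : ℤ → R) (p : R[X]) (m : ℤ) :
    seqConv f (X * p) m = seqConv f p (m - 1) := by
  induction p using Polynomial.induction_on' with
  | add p s hp hs => simp only [mul_add, map_add, Pi.add_apply, hp, hs]
  | monomial j c =>
    rw [X_mul_monomial, seqConv_monomial, seqConv_monomial]
    congr 2
    push_cast
    ring

lemma seqConv_mul (f : ℤ → R) (p s : R[X]) :
    seqConv f (p * s) = seqConv (seqConv f p) s := by
  funext m
  induction s using Polynomial.induction_on' with
  | add s t hs ht => simp only [mul_add, map_add, Pi.add_apply, hs, ht]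
  | monomial j c =>
    induction p using Polynomial.induction_on' with
    | add p t hp ht =>
      simp only [add_mul, map_add, Pi.add_apply, hp, ht, seqConv_monomial]
    | monomial i d =>
      rw [monomial_mul_monomial, seqConv_monomial, seqConv_monomial, seqConv_monomial, mul_assoc]
      congr 2
      push_cast
      ring

lemma seqConv_mul_C (f : ℤ → R) (p : R[X]) (c : R) (m : ℤ) :
    seqConv f (p * C c) m = seqConv f p m * c := by
  rw [seqConv_mul, seqConv_C]

lemma seqConv_smul {G : Type*} [Monoid G] [DistribMulAction G R] [SMulCommClass G R R]
    (f : ℤ → R) (c : G) (p : R[X]) (m : ℤ) : seqConv f (c • p) m = c • seqConv f p m := by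
  induction p using Polynomial.induction_on' with
  | add p s hp hs => simp only [smul_add, map_add, Pi.add_apply, hp, hs]
  | monomial j d => rw [smul_monomial, seqConv_monomial, seqConv_monomial, mul_smul_comm]

lemma seqConv_sub_seq (f g : ℤ → R) (p : R[X]) :
    seqConv (f - g) p = seqConv f p - seqConv g p := by
  funext m
  induction p using Polynomial.induction_on' with
  | add p s hp hs =>
    simp only [map_add, Pi.add_apply, Pi.sub_apply] at hp hs ⊢
    rw [hp, hs]
    abel
  | monomial j c => simp only [Pi.sub_apply, seqConv_monomial, sub_mul]

lemma seqConv_mul_sub_mul_shift (f : ℤ → R) (x y : R) (p : R[X]) (m : ℤ) :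
    seqConv (fun i => x * f i - y * f (i - 1)) p m
      = x * seqConv f p m - y * seqConv f p (m - 1) := by
  induction p using Polynomial.induction_on' with
  | add p s hp hs =>
    simp only [map_add, Pi.add_apply, hp, hs, mul_add]
    abel
  | monomial j c =>
    simp only [seqConv_monomial, sub_mul, mul_assoc, sub_right_comm]

lemma seqConv_eq_mul_coeff_zero {f : ℤ → R} {p : R[X]} {α : ℕ} {m : ℤ} (hp : p.natDegree ≤ α)
    (hf : ∀ i, m - α ≤ i → i < m → f i = 0) : seqConv f p m = f m * p.coeff 0 := by
  rw [seqConv_apply, sum_over_range _ fun j => mul_zero _, Finset.sum_eq_single 0]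
  · simp
  · intro j hj hj₀
    rw [Finset.mem_range] at hj
    rw [hf _ (by omega) (by omega), zero_mul]
  · simp

lemma seqConv_divX (f : ℤ → R) {p : R[X]} (hp : p.coeff 0 = 0) (m : ℤ) :
    seqConv f p.divX m = seqConv f p (m + 1) := by
  conv_rhs => rw [← divX_mul_X_add p, hp, C_0, add_zero, ← X_mul, seqConv_X_mul,
    add_sub_cancel_right]

/-- Nondegeneracy of the `α × α` Toeplitz matrices `(f (s + i - j))`, over a noncommutative ring:
their right kernels, viewed as spaces of polynomials of degree `< α`, are trivial. -/
def ToeplitzNondegenerate (f : ℤ → R) (α : ℕ) : Prop :=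
  ∀ (p : R[X]) (s : ℤ), p.degree < α → (∀ m, s ≤ m → m < s + α → seqConv f p m = 0) → p = 0

lemma toeplitzNondegenerate_zero (f : ℤ → R) : ToeplitzNondegenerate f 0 := by
  intro p _ hp _
  simpa using hp

lemma ToeplitzNondegenerate.eq_zero_of_coeff_zero {f : ℤ → R} {α : ℕ}
    (hf : ToeplitzNondegenerate f α) {p : R[X]} {s : ℤ} (hp₀ : p.coeff 0 = 0)
    (hdeg : p.natDegree ≤ α) (hzero : ∀ m, s ≤ m → m < s + α → seqConv f p m = 0) : p = 0 := by
  have hdivX : p.divX = 0 := by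
    refine hf _ (s - 1) ((degree_lt_iff_coeff_zero _ _).2 fun j hj => ?_) fun m hm₁ hm₂ => ?_
    · rw [coeff_divX, coeff_eq_zero_of_natDegree_lt (by omega)]
    · rw [seqConv_divX f hp₀, hzero _ (by omega) (by omega)]
  rw [← divX_mul_X_add p, hdivX, hp₀, zero_mul, C_0, add_zero]

end SeqConv

section Exchange

variable {𝕜 R : Type*} [CommRing 𝕜] [Ring R] [Algebra 𝕜 R]

/-- The defect of the quadratic exchange relation
`f a * f (b + 1) - q f (a + 1) * f b = q f (b + 1) * f a - f b * f (a + 1)`. -/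
def exchangeDefect (q : 𝕜) (f : ℤ → R) (a b : ℤ) : R :=
  f a * f (b + 1) - q • (f (a + 1) * f b) + f b * f (a + 1) - q • (f (b + 1) * f a)

lemma exchangeDefect_comm (q : 𝕜) (f : ℤ → R) (a b : ℤ) :
    exchangeDefect q f a b = exchangeDefect q f b a := by
  simp only [exchangeDefect]
  abel

/-- The share of the pair `(a, b)` with third index `c` in the expansion of the symmetrized double
commutator in terms of exchange defects. -/
def exchangeShare (q : 𝕜) (f : ℤ → R) (a b c : ℤ) : R :=
  (q - 1) • (exchangeDefect q f a b * f (c - 1))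
    + ⁅f c, exchangeDefect q f a (b - 1) + exchangeDefect q f (a - 1) b⁆
    - (q - 1) • (f (c + 1) * exchangeDefect q f (a - 1) (b - 1))

lemma symmetrized_lie_lie_eq_sum_exchangeShare (q : 𝕜) (f : ℤ → R) (n p k : ℤ) :
    ⁅f n, ⁅f (p - 1), f (k + 1)⁆⁆ + ⁅f n, ⁅f (k - 1), f (p + 1)⁆⁆
        + ⁅f p, ⁅f (n - 1), f (k + 1)⁆⁆ + ⁅f p, ⁅f (k - 1), f (n + 1)⁆⁆
        + ⁅f k, ⁅f (n - 1), f (p + 1)⁆⁆ + ⁅f k, ⁅f (p - 1), f (n + 1)⁆⁆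
      = exchangeShare q f n p k + exchangeShare q f n k p + exchangeShare q f p k n := by
  simp only [exchangeShare, exchangeDefect, sub_add_cancel, Ring.lie_def, mul_add, add_mul,
    mul_sub, sub_mul, mul_smul_comm, smul_mul_assoc, mul_assoc]
  module

lemma exchangeShare_eq_zero {q : 𝕜} {f : ℤ → R} (hf : ∀ a b, exchangeDefect q f a b = 0)
    (a b c : ℤ) : exchangeShare q f a b c = 0 := by
  simp [exchangeShare, hf, Ring.lie_def]

/-- Convolution of `f` with this polynomial agrees, up to exchange defects, with the left operation
`f b ↦ f a * f b - q f (a + 1) * f (b - 1)`. -/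
noncomputable def exchangePoly (q : 𝕜) (f : ℤ → R) (a : ℤ) : R[X] :=
  C (q • f a) - X * C (f (a + 1))

lemma coeff_zero_exchangePoly_mul (q : 𝕜) (f : ℤ → R) (a : ℤ) (p : R[X]) :
    (exchangePoly q f a * p).coeff 0 = q • (f a * p.coeff 0) := by
  simp [exchangePoly, sub_mul, mul_assoc]

lemma coeff_zero_mul_exchangePoly (q : 𝕜) (f : ℤ → R) (a : ℤ) (p : R[X]) :
    (p * exchangePoly q f a).coeff 0 = q • (p.coeff 0 * f a) := by
  simp [exchangePoly]

lemma coeff_succ_exchangePoly_mul (q : 𝕜) (f : ℤ → R) (a : ℤ) (p : R[X]) (j : ℕ) :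
    (exchangePoly q f a * p).coeff (j + 1)
      = q • (f a * p.coeff (j + 1)) - f (a + 1) * p.coeff j := by
  rw [exchangePoly, sub_mul, mul_assoc, coeff_sub, coeff_C_mul, coeff_X_mul, coeff_C_mul,
    smul_mul_assoc]

lemma coeff_succ_mul_exchangePoly (q : 𝕜) (f : ℤ → R) (a : ℤ) (p : R[X]) (j : ℕ) :
    (p * exchangePoly q f a).coeff (j + 1)
      = q • (p.coeff (j + 1) * f a) - p.coeff j * f (a + 1) := by
  rw [exchangePoly, mul_sub, ← mul_assoc, coeff_sub, coeff_mul_C, coeff_mul_C, coeff_mul_X,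
    mul_smul_comm]

lemma seqConv_mul_exchangePoly (q : 𝕜) (f : ℤ → R) (a : ℤ) (p : R[X]) (m : ℤ) :
    seqConv f (p * exchangePoly q f a) m
      = q • (seqConv f p m * f a) - seqConv f p (m - 1) * f (a + 1) := by
  rw [seqConv_mul, exchangePoly, map_sub, Pi.sub_apply, seqConv_C, seqConv_X_mul, seqConv_C,
    mul_smul_comm]

lemma seqConv_exchangePoly (q : 𝕜) (f : ℤ → R) (a : ℤ) :
    seqConv f (exchangePoly q f a)
      = (fun b => f a * f b - (q • f (a + 1)) * f (b - 1))
        - fun b => exchangeDefect q f a (b - 1) := by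
  funext b
  rw [exchangePoly, map_sub, Pi.sub_apply, Pi.sub_apply, seqConv_C, seqConv_X_mul, seqConv_C,
    exchangeDefect, sub_add_cancel, mul_smul_comm, smul_mul_assoc]
  abel

lemma seqConv_exchangePoly_mul (q : 𝕜) (f : ℤ → R) (a : ℤ) (p : R[X]) (m : ℤ) :
    seqConv f (exchangePoly q f a * p) m
      = f a * seqConv f p m - q • (f (a + 1) * seqConv f p (m - 1))
        - seqConv (fun b => exchangeDefect q f a (b - 1)) p m := by
  rw [seqConv_mul, seqConv_exchangePoly, seqConv_sub_seq, Pi.sub_apply,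
    seqConv_mul_sub_mul_shift, smul_mul_assoc]

end Exchange

section ToeplitzKernels

variable {𝕜 R : Type*} [CommRing 𝕜] [Ring R] [Algebra 𝕜 R]

/-- A quantum `M`-system of rank `r` in a `𝕜`-algebra. The field `mul_top` encodes the
elements `A` and `Δ`, which make `M 1 a` and `M (r + 1) n` `q`-commute for all `a` and `n`. -/
structure QuantumMSystem (q : 𝕜ˣ) (r : ℕ) (M : ℕ → ℤ → R) : Prop where
  zero_eq_one : ∀ n, M 0 n = 1
  top_eq_zero : ∀ n, M (r + 2) n = 0
  isUnit : ∀ {α} (n), α ≤ r + 1 → IsUnit (M α n)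
  smul_mul : ∀ {α} (n), α ≤ r →
    q ^ (α + 1) • (M (α + 1) (n + 1) * M (α + 1) (n - 1))
      = M (α + 1) n ^ 2 - M (α + 2) n * M α n
  mul_shift : ∀ {α β : ℕ} (n : ℤ) {d : ℤ}, α ≤ r + 1 → β ≤ r + 1 → |d| ≤ |(β : ℤ) - α| + 1 →
    M α n * M β (n + d) = q ^ (d * (min α β : ℕ)) • (M β (n + d) * M α n)
  mul_top : ∀ a n, M 1 a * M (r + 1) n = q ^ (n - a) • (M (r + 1) n * M 1 a)

/-- The polynomial whose coefficients solve the Toeplitz system of size `α` for the sequence `M 1`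
on the window `n, …, n + α - 1`, scaled to have constant coefficient `M α (n - 1)`. -/
noncomputable def toeplitzPoly (q : 𝕜ˣ) (M : ℕ → ℤ → R) : ℕ → ℤ → R[X]
  | 0, _ => 1
  | α + 1, n => (toeplitzPoly q M α n * C (M (α + 1) (n - 1))
      - X * (toeplitzPoly q M α (n - 1) * C (q⁻¹ ^ (α + 1) • M (α + 1) n))) * C (M α (n - 1))⁻¹ʳ

lemma natDegree_toeplitzPoly_le (q : 𝕜ˣ) (M : ℕ → ℤ → R) (α : ℕ) (n : ℤ) :
    (toeplitzPoly q M α n).natDegree ≤ α := by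
  induction α generalizing n with
  | zero => simp [toeplitzPoly]
  | succ α ih =>
    rw [natDegree_le_iff_coeff_eq_zero]
    rintro (_ | j) hj
    · omega
    · have hcoeff : ∀ (m : ℤ) (i : ℕ), α < i → (toeplitzPoly q M α m).coeff i = 0 :=
        fun m => natDegree_le_iff_coeff_eq_zero.1 (ih m)
      simp only [toeplitzPoly, coeff_mul_C, coeff_sub, coeff_X_mul,
        hcoeff n (j + 1) (by omega), hcoeff (n - 1) j (by omega), zero_mul, sub_zero]

namespace QuantumMSystem

variable {q : 𝕜ˣ} {r : ℕ} {M : ℕ → ℤ → R} {α β : ℕ}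

lemma commute (S : QuantumMSystem q r M) (n : ℤ) (hα : α ≤ r + 2) (hβ : β ≤ r + 2) :
    Commute (M α n) (M β n) := by
  rcases hα.eq_or_lt with rfl | hα
  · simp [S.top_eq_zero]
  rcases hβ.eq_or_lt with rfl | hβ
  · simp [S.top_eq_zero]
  simpa [Commute, SemiconjBy] using
    S.mul_shift (d := 0) n (Nat.le_of_lt_succ hα) (Nat.le_of_lt_succ hβ) 
      (by rw [abs_zero]; positivity)

lemma mul_succ_shift (S : QuantumMSystem q r M) (n : ℤ) (hα : α ≤ r + 2) (hβ : β ≤ r + 2) :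
    M α n * M β (n + 1) = q ^ min α β • (M β (n + 1) * M α n) := by
  rcases hα.eq_or_lt with rfl | hα
  · simp [S.top_eq_zero]
  rcases hβ.eq_or_lt with rfl | hβ
  · simp [S.top_eq_zero]
  simpa only [one_mul, zpow_natCast] using
    S.mul_shift (d := 1) n (Nat.le_of_lt_succ hα) (Nat.le_of_lt_succ hβ) (by simp)

lemma pred_mul (S : QuantumMSystem q r M) (n : ℤ) (hα : α ≤ r + 2) (hβ : β ≤ r + 2) :
    M α (n - 1) * M β n = q ^ min α β • (M β n * M α (n - 1)) := by
  simpa only [sub_add_cancel] using S.mul_succ_shift (n - 1) hα hβ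

lemma one_mul_comm (S : QuantumMSystem q r M) {a n : ℤ} (hβ₁ : 1 ≤ β) (hβ₂ : β ≤ r + 2)
    (hdist : |n - a| ≤ β ∨ r + 1 ≤ β) :
    M 1 a * M β n = q ^ (n - a) • (M β n * M 1 a) := by
  rcases hβ₂.eq_or_lt with rfl | hβ₂
  · simp [S.top_eq_zero]
  rcases hdist with hdist | hdist
  · have h := S.mul_shift (α := 1) (β := β) a (d := n - a) (by omega) (by omega) (by
      rw [abs_of_nonneg (a := (β : ℤ) - (1 : ℕ)) (by omega)]
      push_cast
      omega)
    simpa [min_eq_left hβ₁] using h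
  · obtain rfl : β = r + 1 := by omega
    exact S.mul_top a n

lemma pred_mul_succ (S : QuantumMSystem q r M) (n : ℤ) (hα : α ≤ r) :
    M (α + 1) (n - 1) * M (α + 1) (n + 1)
      = q ^ (α + 1) • M (α + 1) n ^ 2 - q ^ α • (M (α + 2) n * M α n) := by
  have hself := S.mul_succ_shift (α := α + 1) (β := α + 1) n (by omega) (by omega)
  have hup := S.mul_succ_shift (α := α + 2) (β := α + 1) n (by omega) (by omega)
  have hdown := S.mul_succ_shift (α := α) (β := α + 1) n (by omega) (by omega)
  rw [min_self] at hself
  rw [min_eq_right (by omega)] at hup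
  rw [min_eq_left (by omega)] at hdown
  apply (S.isUnit (α := α + 1) (n + 1) (by omega)).mul_left_cancel
  apply smul_left_cancel (q ^ (α + 1))
  calc q ^ (α + 1) • (M (α + 1) (n + 1) * (M (α + 1) (n - 1) * M (α + 1) (n + 1)))
      = (M (α + 1) n ^ 2 - M (α + 2) n * M α n) * M (α + 1) (n + 1) := by
        rw [← S.smul_mul n hα, smul_mul_assoc, mul_assoc]
    _ = M (α + 1) n * (M (α + 1) n * M (α + 1) (n + 1))
          - M (α + 2) n * (M α n * M (α + 1) (n + 1)) := by
        rw [sub_mul, sq, mul_assoc, mul_assoc]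
    _ = q ^ (α + 1) • (q ^ (α + 1) • (M (α + 1) (n + 1) * M (α + 1) n ^ 2)
          - q ^ α • (M (α + 1) (n + 1) * (M (α + 2) n * M α n))) := by
        rw [hself, hdown, mul_smul_comm, mul_smul_comm, ← mul_assoc, ← mul_assoc, hself, hup,
          smul_mul_assoc, smul_mul_assoc, smul_sub, smul_comm (q ^ α), sq, mul_assoc, mul_assoc]
    _ = _ := by rw [mul_sub, mul_smul_comm, mul_smul_comm]

lemma toeplitzPoly_succ_mul_C_pred (S : QuantumMSystem q r M) (n : ℤ) (hα : α ≤ r + 1) :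
    toeplitzPoly q M (α + 1) n * C (M α (n - 1))
      = toeplitzPoly q M α n * C (M (α + 1) (n - 1))
        - X * (toeplitzPoly q M α (n - 1) * C (q⁻¹ ^ (α + 1) • M (α + 1) n)) := by
  rw [toeplitzPoly, mul_assoc, ← C_mul, Ring.inverse_mul_cancel _ (S.isUnit _ hα), C_1, mul_one]

lemma seqConv_toeplitzPoly_succ_mul_pred (S : QuantumMSystem q r M) (n m : ℤ) (hα : α ≤ r + 1) :
    seqConv (M 1) (toeplitzPoly q M (α + 1) n) m * M α (n - 1)
      = seqConv (M 1) (toeplitzPoly q M α n) m * M (α + 1) (n - 1)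
        - q⁻¹ ^ (α + 1) •
          (seqConv (M 1) (toeplitzPoly q M α (n - 1)) (m - 1) * M (α + 1) n) := by
  rw [← seqConv_mul_C, S.toeplitzPoly_succ_mul_C_pred n hα, map_sub, Pi.sub_apply, seqConv_mul_C,
    seqConv_X_mul, seqConv_mul_C, mul_smul_comm]

lemma coeff_zero_toeplitzPoly (S : QuantumMSystem q r M) (n : ℤ) (hα : α ≤ r + 1) :
    (toeplitzPoly q M α n).coeff 0 = M α (n - 1) := by
  induction α with
  | zero => simp [toeplitzPoly, S.zero_eq_one]
  | succ α ih =>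
    apply (S.isUnit (α := α) (n - 1) (by omega)).mul_right_cancel
    rw [← coeff_mul_C, S.toeplitzPoly_succ_mul_C_pred n (by omega), coeff_sub, coeff_X_mul_zero,
      coeff_mul_C, ih (by omega), sub_zero]
    exact S.commute (n - 1) (by omega) (by omega)

lemma coeff_self_toeplitzPoly (S : QuantumMSystem q r M) (n : ℤ) (hα : α ≤ r + 1) :
    (toeplitzPoly q M α n).coeff α = (-q⁻¹) ^ α • M α n := by
  induction α generalizing n with
  | zero => simp [toeplitzPoly, S.zero_eq_one]
  | succ α ih =>
    have hdeg : (toeplitzPoly q M α n).coeff (α + 1) = 0 :=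
      coeff_eq_zero_of_natDegree_lt (Nat.lt_succ_of_le (natDegree_toeplitzPoly_le q M α n))
    have hcomm := S.pred_mul (α := α) (β := α + 1) n (by omega) (by omega)
    rw [min_eq_left (by omega)] at hcomm
    apply (S.isUnit (α := α) (n - 1) (by omega)).mul_right_cancel
    rw [← coeff_mul_C, S.toeplitzPoly_succ_mul_C_pred n (by omega), coeff_sub, coeff_X_mul,
      coeff_mul_C, coeff_mul_C, hdeg, ih (n - 1) (by omega), zero_mul, zero_sub, smul_mul_smul_comm,
      hcomm, smul_smul, smul_mul_assoc, ← Units.neg_smul]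
    congr 1
    rw [pow_succ (-q⁻¹), pow_succ q⁻¹, inv_pow]
    simp [mul_assoc]

lemma seqConv_toeplitzPoly_pred (S : QuantumMSystem q r M) (n : ℤ) (hα : α ≤ r + 1) :
    seqConv (M 1) (toeplitzPoly q M α n) (n - 1) = q⁻¹ ^ α • M (α + 1) (n - 1) := by
  induction α generalizing n with
  | zero => simp [toeplitzPoly, ← C_1, seqConv_C, -map_one]
  | succ α ih =>
    have hrev := S.pred_mul_succ (α := α) (n - 1) (by omega)
    rw [sub_add_cancel] at hrev
    apply (S.isUnit (α := α) (n - 1) (by omega)).mul_right_cancel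
    rw [S.seqConv_toeplitzPoly_succ_mul_pred n (n - 1) (by omega), ih n (by omega),
      ih (n - 1) (by omega), smul_mul_assoc, smul_mul_assoc, hrev, smul_sub, smul_sub,
      smul_smul, smul_smul, smul_smul, smul_smul, ← sq, smul_mul_assoc]
    have hsq : q⁻¹ ^ (α + 1) * q⁻¹ ^ α * q ^ (α + 1) = q⁻¹ ^ α := by simp
    have hprod : q⁻¹ ^ (α + 1) * q⁻¹ ^ α * q ^ α = q⁻¹ ^ (α + 1) := by simp
    rw [hsq, hprod, sub_sub_cancel]

/-- The values of the Toeplitz polynomials of size `α` on their window and just after it. -/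
structure ToeplitzValues (q : 𝕜ˣ) (M : ℕ → ℤ → R) (α : ℕ) : Prop where
  window : ∀ n m : ℤ, n ≤ m → m < n + α → seqConv (M 1) (toeplitzPoly q M α n) m = 0
  next : ∀ n : ℤ, seqConv (M 1) (toeplitzPoly q M α n) (n + α) = (-q⁻¹) ^ α • M (α + 1) n

lemma toeplitzValues_zero (q : 𝕜ˣ) (M : ℕ → ℤ → R) : ToeplitzValues q M 0 where
  window n m h₁ h₂ := absurd h₂ (by simpa using h₁)
  next n := by simp [toeplitzPoly, ← C_1, seqConv_C, -map_one]

lemma toeplitzNondegenerate_succ (S : QuantumMSystem q r M) (hα : α ≤ r)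
    (hval : ToeplitzValues q M α) (hnd : ToeplitzNondegenerate (M 1) α) :
    ToeplitzNondegenerate (M 1) (α + 1) := by
  intro p s hdeg hzero
  set c := (M α (s - 1))⁻¹ʳ * p.coeff 0 with hc
  have hp : p = toeplitzPoly q M α s * C c := by
    refine sub_eq_zero.1 (hnd.eq_zero_of_coeff_zero (s := s) ?_ ?_ fun m hm₁ hm₂ => ?_)
    · rw [coeff_sub, coeff_mul_C, S.coeff_zero_toeplitzPoly s (by omega), hc,
        Ring.mul_inverse_cancel_left _ _ (S.isUnit _ (by omega)), sub_self]
    · refine (natDegree_sub_le_of_le (n := α) (m := α) ?_ ?_).trans (max_self α).le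
      · exact natDegree_le_iff_coeff_eq_zero.2 fun j hj =>
          (degree_lt_iff_coeff_zero p (α + 1)).1 hdeg j hj
      · exact (natDegree_mul_C_le _ _).trans (natDegree_toeplitzPoly_le q M α s)
    · rw [map_sub, Pi.sub_apply, hzero m hm₁ (by push_cast; omega), seqConv_mul_C,
        hval.window s m hm₁ hm₂, zero_mul, sub_zero]
  have hc₀ : c = 0 := by
    have h := hzero (s + α) (by omega) (by push_cast; omega)
    rw [hp, seqConv_mul_C, hval.next, smul_mul_assoc, smul_eq_zero_iff_eq] at h
    exact (S.isUnit s (by omega)).mul_right_eq_zero.1 h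
  rw [hp, hc₀, C_0, mul_zero]

lemma seqConv_toeplitzPoly_succ_eq_zero (S : QuantumMSystem q r M) (hα : α ≤ r)
    (hval : ToeplitzValues q M α) {n m : ℤ} (hm₁ : n ≤ m) (hm₂ : m < n + (α + 1 : ℕ)) :
    seqConv (M 1) (toeplitzPoly q M (α + 1) n) m = 0 := by
  apply (S.isUnit (α := α) (n - 1) (by omega)).mul_right_cancel
  rw [S.seqConv_toeplitzPoly_succ_mul_pred n m (by omega), zero_mul]
  push_cast at hm₂
  obtain hm | rfl : m < n + α ∨ m = n + α := by omega
  · simp [hval.window n m hm₁ hm, hval.window (n - 1) (m - 1) (by omega) (by omega)]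
  · have hcomm := S.pred_mul (α := α + 1) (β := α + 1) n (by omega) (by omega)
    rw [min_self] at hcomm
    rw [hval.next, add_sub_right_comm, hval.next, smul_mul_assoc, smul_mul_assoc, hcomm,
      smul_smul, smul_smul, sub_eq_zero]
    congr 1
    simp

/-- Both sides vanish on the same window and have the same constant coefficient. -/
lemma toeplitzPoly_succ_mul_C (S : QuantumMSystem q r M) (hα : α ≤ r)
    (hval : ToeplitzValues q M α) (hnd : ToeplitzNondegenerate (M 1) (α + 1)) (n : ℤ) :
    toeplitzPoly q M (α + 1) n * C (M α n)
      = toeplitzPoly q M α (n + 1) * C (q ^ α • M (α + 1) (n - 1))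
        - X * (toeplitzPoly q M α n * C (q⁻¹ • M (α + 1) n)) := by
  refine sub_eq_zero.1 (hnd.eq_zero_of_coeff_zero (s := n) ?_ ?_ fun m hm₁ hm₂ => ?_)
  · have hcomm := S.pred_mul (α := α + 1) (β := α) n (by omega) (by omega)
    rw [min_eq_right (by omega)] at hcomm
    rw [coeff_sub, coeff_sub, coeff_X_mul_zero, coeff_mul_C, coeff_mul_C,
      S.coeff_zero_toeplitzPoly n (by omega), S.coeff_zero_toeplitzPoly (n + 1) (by omega),
      add_sub_cancel_right, hcomm, mul_smul_comm, sub_zero, sub_self]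
  · have hsucc := natDegree_toeplitzPoly_le q M (α + 1) n
    have hnext := natDegree_toeplitzPoly_le q M α (n + 1)
    have hself := natDegree_toeplitzPoly_le q M α n
    compute_degree
    omega
  · rw [map_sub, map_sub, Pi.sub_apply, Pi.sub_apply, seqConv_mul_C, seqConv_mul_C, seqConv_X_mul,
      seqConv_mul_C, S.seqConv_toeplitzPoly_succ_eq_zero hα hval hm₁ hm₂, zero_mul, zero_sub,
      neg_eq_zero]
    obtain rfl | hm₁ := hm₁.eq_or_lt
    · have hpred := S.seqConv_toeplitzPoly_pred (α := α) (n + 1) (by omega)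
      have hcomm := S.pred_mul (α := α + 1) (β := α + 1) n (by omega) (by omega)
      rw [add_sub_cancel_right] at hpred
      rw [min_self] at hcomm
      rw [hpred, S.seqConv_toeplitzPoly_pred n (by omega), smul_mul_smul_comm, smul_mul_smul_comm,
        hcomm, smul_smul, sub_eq_zero]
      have hscalar : q⁻¹ ^ α * q ^ α = q⁻¹ ^ α * q⁻¹ * q ^ (α + 1) := by
        simp [pow_succ', mul_assoc]
      rw [hscalar]
    · push_cast at hm₂
      simp [hval.window (n + 1) m (by omega) (by omega),
        hval.window n (m - 1) (by omega) (by omega)]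

lemma toeplitzValues_succ (S : QuantumMSystem q r M) (hα : α ≤ r)
    (hval : ToeplitzValues q M α) (hnd : ToeplitzNondegenerate (M 1) (α + 1)) :
    ToeplitzValues q M (α + 1) where
  window _ _ := S.seqConv_toeplitzPoly_succ_eq_zero hα hval
  next n := by
    apply (S.isUnit (α := α) n (by omega)).mul_right_cancel
    have hnext := hval.next (n + 1)
    rw [show n + 1 + (α : ℤ) = n + (α + 1 : ℕ) by push_cast; ring] at hnext
    rw [← seqConv_mul_C, S.toeplitzPoly_succ_mul_C hα hval hnd n, map_sub, Pi.sub_apply,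
      seqConv_mul_C, seqConv_X_mul, seqConv_mul_C, hnext,
      show n + ((α + 1 : ℕ) : ℤ) - 1 = n + α by push_cast; ring, hval.next]
    have hprod : M (α + 2) n * M α n
        = M (α + 1) n ^ 2 - q ^ (α + 1) • (M (α + 1) (n + 1) * M (α + 1) (n - 1)) := by
      rw [S.smul_mul n hα, sub_sub_cancel]
    rw [smul_mul_smul_comm, smul_mul_smul_comm, smul_mul_assoc, hprod, smul_sub, smul_smul, ← sq,
      sub_eq_add_neg, sub_eq_neg_add _ (_ • _), ← Units.neg_smul, ← Units.neg_smul]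
    congr 2
    · simp [pow_succ (-q⁻¹), pow_succ' q, mul_assoc]
    · simp [pow_succ]

theorem toeplitzValues_and_nondegenerate (S : QuantumMSystem q r M) (hα : α ≤ r + 1) :
    ToeplitzValues q M α ∧ ToeplitzNondegenerate (M 1) α := by
  induction α with
  | zero => exact ⟨toeplitzValues_zero q M, toeplitzNondegenerate_zero _⟩
  | succ α ih =>
    obtain ⟨hval, hnd⟩ := ih (by omega)
    have hnd_succ := S.toeplitzNondegenerate_succ (by omega) hval hnd
    exact ⟨S.toeplitzValues_succ (by omega) hval hnd_succ, hnd_succ⟩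

theorem exchangePoly_mul_toeplitzPoly (S : QuantumMSystem q r M) {a n : ℤ} (hα₁ : 1 ≤ α)
    (hα₂ : α ≤ r + 1) (hn : n = a + 2 ∨ α = r + 1)
    (hdefect : ∀ b, n - α ≤ b → b < n + α → exchangeDefect (q : 𝕜) (M 1) a (b - 1) = 0) :
    exchangePoly (q : 𝕜) (M 1) a * toeplitzPoly q M α n
      = q ^ (n - a - 1) • (toeplitzPoly q M α n * exchangePoly (q : 𝕜) (M 1) a) := by
  obtain ⟨hval, hnd⟩ := S.toeplitzValues_and_nondegenerate hα₂
  have hdeg := natDegree_le_iff_coeff_eq_zero.1 (natDegree_toeplitzPoly_le q M α n)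
  refine sub_eq_zero.1 (hnd.eq_zero_of_coeff_zero (s := n) ?_ ?_ fun m hm₁ hm₂ => ?_)
  · have hcomm := S.one_mul_comm (a := a) (n := n - 1) hα₁ (by omega) (by grind)
    rw [coeff_sub, coeff_smul, coeff_zero_exchangePoly_mul, coeff_zero_mul_exchangePoly,
      S.coeff_zero_toeplitzPoly n hα₂, hcomm, smul_comm, sub_right_comm, sub_self]
  · rw [natDegree_le_iff_coeff_eq_zero]
    rintro (_ | j) hj
    · omega
    rw [coeff_sub, coeff_smul, coeff_succ_exchangePoly_mul, coeff_succ_mul_exchangePoly,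
      hdeg (j + 1) (by omega)]
    obtain rfl | hj : α = j ∨ α < j := by omega
    · have hcomm := S.one_mul_comm (a := a + 1) (n := n) hα₁ (by omega) (by grind)
      rw [S.coeff_self_toeplitzPoly n hα₂, mul_smul_comm, hcomm, smul_comm, smul_mul_assoc]
      simp [sub_sub]
    · simp [hdeg j hj]
  · have hconv : seqConv (fun b => exchangeDefect (q : 𝕜) (M 1) a (b - 1))
        (toeplitzPoly q M α n) m = 0 := by
      rw [seqConv_eq_mul_coeff_zero (natDegree_toeplitzPoly_le q M α n) fun i hi₁ hi₂ =>
        hdefect i (by omega) (by omega), hdefect m (by omega) hm₂, zero_mul]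
    rw [map_sub, Pi.sub_apply, seqConv_smul, seqConv_exchangePoly_mul, seqConv_mul_exchangePoly,
      hconv, hval.window n m hm₁ hm₂]
    obtain rfl | hm₁ := hm₁.eq_or_lt
    · have hcomm := S.one_mul_comm (β := α + 1) (a := a + 1) (n := n - 1) (by omega) (by omega)
        (by grind)
      rw [S.seqConv_toeplitzPoly_pred n hα₂, mul_smul_comm, hcomm, smul_mul_assoc]
      have hpow : q ^ (n - a - 1) = q * q ^ (n - 1 - (a + 1)) := by
        rw [← zpow_one_add]
        ring_nf
      simp only [hpow, Units.smul_def, Units.val_mul, mul_zero, zero_mul]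
      module
    · simp [hval.window n (m - 1) (by omega) (by omega)]

theorem exchangeDefect_eq_zero_of_window (S : QuantumMSystem q r M) {a n : ℤ} (hα₁ : 1 ≤ α)
    (hα₂ : α ≤ r + 1) (hn : n = a + 2 ∨ α = r + 1)
    (hdefect : ∀ b, n - α ≤ b → b < n + α → exchangeDefect (q : 𝕜) (M 1) a (b - 1) = 0) :
    exchangeDefect (q : 𝕜) (M 1) a (n + α - 1) = 0 := by
  obtain ⟨hval, -⟩ := S.toeplitzValues_and_nondegenerate hα₂
  have hcomm := S.one_mul_comm (β := α + 1) (a := a) (n := n) (by omega) (by omega) (by grind)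
  have hconv := congr_fun (congr_arg (seqConv (M 1))
    (S.exchangePoly_mul_toeplitzPoly hα₁ hα₂ hn hdefect)) (n + α)
  rw [seqConv_smul, seqConv_exchangePoly_mul, seqConv_mul_exchangePoly,
    seqConv_eq_mul_coeff_zero (natDegree_toeplitzPoly_le q M α n) fun i hi₁ hi₂ =>
      hdefect i (by omega) hi₂,
    hval.window n (n + α - 1) (by omega) (by omega), hval.next, S.coeff_zero_toeplitzPoly n hα₂,
    mul_smul_comm, hcomm] at hconv
  apply (S.isUnit (α := α) (n - 1) hα₂).mul_left_eq_zero.1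
  have hpow : q ^ (n - a) = q ^ (n - a - 1) * q := by rw [← zpow_add_one, sub_add_cancel]
  have hmain : (-q⁻¹) ^ α • q ^ (n - a) • (M (α + 1) n * M 1 a)
      = q ^ (n - a - 1) • ((q : 𝕜) • ((-q⁻¹) ^ α • M (α + 1) n * M 1 a)) := by
    simp only [hpow, Units.smul_def, Units.val_mul, smul_mul_assoc]
    module
  rwa [hmain, mul_zero, zero_mul, smul_zero, sub_zero, sub_zero, sub_eq_self] at hconv

lemma exchangeDefect_self (S : QuantumMSystem q r M) (a : ℤ) :
    exchangeDefect (q : 𝕜) (M 1) a a = 0 := by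
  have hcomm := S.mul_succ_shift (α := 1) (β := 1) a (by omega) (by omega)
  rw [min_self, pow_one, Units.smul_def] at hcomm
  rw [exchangeDefect, hcomm]
  abel

lemma exchangeDefect_add_one (S : QuantumMSystem q r M) (a : ℤ) :
    exchangeDefect (q : 𝕜) (M 1) a (a + 1) = 0 := by
  have hsys := S.smul_mul (α := 0) (a + 1) (Nat.zero_le r)
  have hrev := S.pred_mul_succ (α := 0) (a + 1) (Nat.zero_le r)
  simp only [zero_add, pow_one, pow_zero, one_smul, S.zero_eq_one, mul_one, add_sub_cancel_right,
    Units.smul_def] at hsys hrev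
  rw [exchangeDefect, hsys, hrev, sq]
  abel

theorem exchangeDefect_eq_zero (S : QuantumMSystem q r M) (a b : ℤ) :
    exchangeDefect (q : 𝕜) (M 1) a b = 0 := by
  induction hd : (b - a).natAbs using Nat.strong_induction_on generalizing a b with
  | _ d ih =>
    wlog hab : a ≤ b generalizing a b
    · rw [exchangeDefect_comm]
      exact this b a (by omega) (by omega)
    obtain rfl | rfl | hb : b = a ∨ b = a + 1 ∨ a + 2 ≤ b := by omega
    · exact S.exchangeDefect_self b
    · exact S.exchangeDefect_add_one a
    -- At large distance only the top row `M (r + 1)` still `q`-commutes with `M 1 a`.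
    obtain ⟨α, hα₁, hα₂, hαd, hα⟩ : ∃ α : ℕ, 1 ≤ α ∧ α ≤ r + 1 ∧ α + 1 ≤ d ∧
        (α + 1 = d ∨ α = r + 1) := ⟨min (d - 1) (r + 1), by omega⟩
    have h := S.exchangeDefect_eq_zero_of_window (a := a) (n := b + 1 - α) hα₁ hα₂ (by omega)
      fun c hc₁ hc₂ => ih _ (by omega) a (c - 1) rfl
    rwa [sub_add_cancel, add_sub_cancel_right] at h

theorem symmetrized_lie_lie_eq_zero (S : QuantumMSystem q r M) (n p k : ℤ) :
    ⁅M 1 n, ⁅M 1 (p - 1), M 1 (k + 1)⁆⁆ + ⁅M 1 n, ⁅M 1 (k - 1), M 1 (p + 1)⁆⁆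
        + ⁅M 1 p, ⁅M 1 (n - 1), M 1 (k + 1)⁆⁆ + ⁅M 1 p, ⁅M 1 (k - 1), M 1 (n + 1)⁆⁆
        + ⁅M 1 k, ⁅M 1 (n - 1), M 1 (p + 1)⁆⁆ + ⁅M 1 k, ⁅M 1 (p - 1), M 1 (n + 1)⁆⁆ = 0 := by
  have hshare := exchangeShare_eq_zero S.exchangeDefect_eq_zero
  rw [symmetrized_lie_lie_eq_sum_exchangeShare (q : 𝕜), hshare, hshare, hshare, add_zero, add_zero]

end QuantumMSystem

end ToeplitzKernels

section ScalarCommutation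

variable {𝕜 R : Type*} [CommRing 𝕜] [Ring R] [Algebra 𝕜 R]

lemma units_zpow_mul_eq_smul {q : 𝕜ˣ} {A : Rˣ} {x : R} (h : A * x = q • (x * A)) (n : ℤ) :
    ((A ^ n : Rˣ) : R) * x = q ^ n • (x * ((A ^ n : Rˣ) : R)) := by
  have hq : Commute (Units.map (algebraMap 𝕜 R : 𝕜 →* R) q) A :=
    Units.ext (Algebra.commutes (q : 𝕜) (A : R))
  have hsemi : SemiconjBy x ((Units.map (algebraMap 𝕜 R : 𝕜 →* R) q * A : Rˣ) : R) (A : R) := by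
    rw [SemiconjBy, h, Units.val_mul, Units.coe_map, MonoidHom.coe_coe, ← Algebra.smul_def,
      mul_smul_comm, Units.smul_def]
  have hn := hsemi.units_zpow_right n
  rw [SemiconjBy, hq.mul_zpow, ← map_zpow, Units.val_mul, Units.coe_map, MonoidHom.coe_coe,
    ← Algebra.smul_def, mul_smul_comm, ← Units.smul_def] at hn
  exact hn.symm

lemma mul_zpow_mul_eq_smul {q : 𝕜ˣ} {A D : Rˣ} {x : R} {a : ℤ}
    (hA : (A : R) * x = q⁻¹ • (x * A)) (hD : (D : R) * x = q ^ a • (x * D)) (n : ℤ) :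
    x * (((A ^ n : Rˣ) : R) * D) = q ^ (n - a) • (((A ^ n : Rˣ) : R) * D * x) := by
  rw [mul_assoc _ (D : R), hD, mul_smul_comm, ← mul_assoc _ x, units_zpow_mul_eq_smul hA,
    smul_mul_assoc, smul_smul, smul_smul, mul_assoc, ← zpow_neg_one, ← zpow_mul, ← zpow_add,
    ← zpow_add, show n - a + (a + -1 * n) = 0 by ring, zpow_zero, one_smul, mul_assoc]

end ScalarCommutation

section Center

variable {R : Type*} [Ring R]

/-- A central unit of `R` as a unit of the center of `R`. -/
def unitOfCentral (q : Rˣ) (hq : ∀ x : R, (q : R) * x = x * q) : (Subring.center R)ˣ where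
  val := ⟨q, Subring.mem_center_iff.2 fun x => (hq x).symm⟩
  inv := ⟨↑q⁻¹, Set.units_inv_mem_center (Subring.mem_center_iff.2 fun x => (hq x).symm)⟩
  val_inv := Subtype.ext q.mul_inv
  inv_val := Subtype.ext q.inv_mul

lemma unitOfCentral_zpow_smul (q : Rˣ) (hq : ∀ x : R, (q : R) * x = x * q) (k : ℤ) (x : R) :
    unitOfCentral q hq ^ k • x = ((q ^ k : Rˣ) : R) * x := by
  have hmap : Units.map (Subring.center R).subtype (unitOfCentral q hq) = q := Units.ext rfl
  conv_rhs => rw [← hmap, ← map_zpow]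
  rfl

lemma unitOfCentral_pow_smul (q : Rˣ) (hq : ∀ x : R, (q : R) * x = x * q) (k : ℕ) (x : R) :
    unitOfCentral q hq ^ k • x = (q : R) ^ k * x := by
  simpa using unitOfCentral_zpow_smul q hq k x

end Center

theorem quantum_Q_cubic_relation
    {R : Type*} [Ring R] (q A Δ : Rˣ)
    (hq : ∀ x : R, (q : R) * x = x * (q : R))
    (r : ℕ) (hr : 1 ≤ r)
    (M Mi : ℕ → ℤ → R)
    (hM0 : ∀ n : ℤ, M 0 n = 1)
    (hMtop : ∀ n : ℤ, M (r + 2) n = 0)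
    (hMiL : ∀ (α : ℕ) (n : ℤ), α ≤ r + 1 → M α n * Mi α n = 1)
    (hMiR : ∀ (α : ℕ) (n : ℤ), α ≤ r + 1 → Mi α n * M α n = 1)
    (hMsys : ∀ (α : ℕ) (n : ℤ), 1 ≤ α → α ≤ r + 1 →
      (q : R) ^ α * M α (n + 1) * M α (n - 1) = M α n ^ 2 - M (α + 1) n * M (α - 1) n)
    (hcom : ∀ (α β ε : ℕ) (n : ℤ), ε ≤ 1 → α ≤ r + 1 → β ≤ r + 1 →
      M α n * M β (n + (ε : ℤ)) = (q : R) ^ (ε * min α β) * M β (n + (ε : ℤ)) * M α n)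
    (hAΔ : ∀ n : ℤ, M (r + 1) n = ((A ^ n : Rˣ) : R) * (Δ : R))
    (hΔM : ∀ (α : ℕ) (n : ℤ), 1 ≤ α → α ≤ r + 1 →
      (Δ : R) * M α n = ((q ^ ((α : ℤ) * n) : Rˣ) : R) * M α n * (Δ : R))
    (hAM : ∀ (α : ℕ) (n : ℤ), 1 ≤ α → α ≤ r + 1 →
      (A : R) * M α n = ((q ^ (-(α : ℤ)) : Rˣ) : R) * M α n * (A : R))
    (hΔA : (Δ : R) * (A : R) = (q : R) ^ (r + 1) * (A : R) * (Δ : R))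
    (hext : ∀ (α β : ℕ) (n p : ℤ), α ≤ r + 1 → β ≤ r + 1 →
      |p| ≤ |(β : ℤ) - (α : ℤ)| + 1 →
      M α n * M β (n + p) = ((q ^ (p * ((min α β : ℕ) : ℤ)) : Rˣ) : R) * M β (n + p) * M α n) :
    ∀ n p k : ℤ,
      ⁅M 1 n, ⁅M 1 (p - 1), M 1 (k + 1)⁆⁆ + ⁅M 1 n, ⁅M 1 (k - 1), M 1 (p + 1)⁆⁆
        + ⁅M 1 p, ⁅M 1 (n - 1), M 1 (k + 1)⁆⁆ + ⁅M 1 p, ⁅M 1 (k - 1), M 1 (n + 1)⁆⁆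
        + ⁅M 1 k, ⁅M 1 (n - 1), M 1 (p + 1)⁆⁆ + ⁅M 1 k, ⁅M 1 (p - 1), M 1 (n + 1)⁆⁆ = 0 := by
  have S : QuantumMSystem (unitOfCentral q hq) r M :=
    { zero_eq_one := hM0
      top_eq_zero := hMtop
      isUnit := fun n hα => isUnit_iff_exists.2 ⟨Mi _ n, hMiL _ n hα, hMiR _ n hα⟩
      smul_mul := fun n hα => by
        rw [unitOfCentral_pow_smul, ← mul_assoc]
        exact hMsys _ n (Nat.le_add_left 1 _) (Nat.add_le_add_right hα 1)
      mul_shift := fun n d hα hβ hd => by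
        rw [unitOfCentral_zpow_smul, ← mul_assoc]
        exact hext _ _ n d hα hβ hd
      mul_top := fun a n => by
        rw [hAΔ]
        refine mul_zpow_mul_eq_smul ?_ ?_ n
        · rw [← zpow_neg_one, unitOfCentral_zpow_smul, ← mul_assoc]
          simpa using hAM 1 a le_rfl (Nat.le_add_left 1 r)
        · rw [unitOfCentral_zpow_smul, ← mul_assoc]
          simpa using hΔM 1 a le_rfl (Nat.le_add_left 1 r) }
  exact S.symmetrized_lie_lie_eq_zero
end

section
/- Left M-system: under these hypotheses, q^{−α}·M_{α,n-1}·M_{α,n+1} = M_{α,n}² − q^{−1}·M_{α+1,n}·M_{α-1,n} for all 1 ≤ α ≤ r+1 and n ∈ ℤ. -/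
/-!
Put `X = M_{α,n+1}` and `Y = M_{α,n-1}`. Since `X * (Y * X) = (X * Y) * X`, the product `Y * X` is
the transform of `X * Y` under conjugation by `X`. Conjugating the M-system relation by `X`
therefore reverses its left-hand side, while on the right-hand side the commutation relations
rescale `M_{α,n}` and `M_{α+1,n}` by `q ^ α` and `M_{α-1,n}` by `q ^ (α - 1)`. Dividing by
`q ^ (2 * α)` gives the claim.
-/

theorem semiconjBy_mul_of_mul_eq {S : Type*} [Semigroup S] {c x z : S} (hc : Commute c x)
    (h : z * x = c * x * z) : SemiconjBy x (c * z) z :=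
  calc x * (c * z) = c * x * z := by rw [← mul_assoc, hc.eq]
    _ = z * x := h.symm

theorem eq_of_semiconjBy_of_isLeftRegular {S : Type*} [Mul S] {x s t t' : S}
    (hx : IsLeftRegular x) (h : SemiconjBy x t s) (h' : SemiconjBy x t' s) : t = t' :=
  hx (h.eq.trans h'.eq.symm)

section Ring

variable {R : Type*} [Ring R]

theorem mul_swap_eq_of_semiconjBy {c d x y z p w : R} (hx : IsLeftRegular x)
    (hdx : Commute d x) (hsys : d * x * y = z ^ 2 - p * w)
    (hz : SemiconjBy x (d * z) z) (hp : SemiconjBy x (d * p) p) (hw : SemiconjBy x (c * w) w) :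
    d * (y * x) = (d * z) ^ 2 - d * p * (c * w) := by
  have swap : SemiconjBy x (d * (y * x)) (d * x * y) := by
    rw [mul_assoc d x y]
    exact hdx.symm.semiconjBy.mul_right (mul_assoc x y x).symm
  rw [hsys] at swap
  exact eq_of_semiconjBy_of_isLeftRegular hx swap
    ((hz.pow_right 2).sub_right (hp.mul_right hw))

theorem inv_mul_swap_eq_of_semiconjBy {c d : Rˣ} {x y z p w : R} (hx : IsLeftRegular x)
    (hcp : Commute (c : R) p) (hdx : Commute (d : R) x) (hdz : Commute (d : R) z)
    (hsys : d * x * y = z ^ 2 - p * w)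
    (hz : SemiconjBy x (d * z) z) (hp : SemiconjBy x (d * p) p) (hw : SemiconjBy x (c * w) w) :
    ((d⁻¹ : Rˣ) : R) * y * x = z ^ 2 - ((d⁻¹ * c : Rˣ) : R) * p * w := by
  have swapped : (d : R) * (y * x) = d * (d * z ^ 2 - c * (p * w)) := by
    rw [mul_swap_eq_of_semiconjBy hx hdx hsys hz hp hw, hdz.mul_pow, mul_sub, mul_assoc _ p,
      ← mul_assoc p, ← hcp.eq, mul_assoc _ p, sq (d : R), mul_assoc]
  rw [mul_assoc, d.mul_right_inj.mp swapped, mul_sub, Units.inv_mul_cancel_left, Units.val_mul,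
    mul_assoc _ p, mul_assoc]

end Ring

theorem quantum_Q_left_M_system_general {R : Type*} [Ring R] (q : Rˣ)
    (hq : ∀ x : R, Commute (q : R) x) (N : ℕ) (M : ℕ → ℤ → R)
    (hMtop : ∀ n : ℤ, M (N + 1) n = 0)
    (hMreg : ∀ (α : ℕ) (n : ℤ), 1 ≤ α → α ≤ N → IsLeftRegular (M α n))
    (hMsys : ∀ (α : ℕ) (n : ℤ), 1 ≤ α → α ≤ N →
      (q : R) ^ α * M α (n + 1) * M α (n - 1) = M α n ^ 2 - M (α + 1) n * M (α - 1) n)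
    (hcom : ∀ (α β : ℕ) (n : ℤ), α ≤ N → β ≤ N →
      M α n * M β (n + 1) = (q : R) ^ min α β * M β (n + 1) * M α n)
    (α : ℕ) (n : ℤ) (hα : 1 ≤ α) (hαN : α ≤ N) :
    ((q ^ (-(α : ℤ)) : Rˣ) : R) * M α (n - 1) * M α (n + 1)
      = M α n ^ 2 - ((q⁻¹ : Rˣ) : R) * M (α + 1) n * M (α - 1) n := by
  have central (m : ℕ) (x : R) : Commute ((q ^ m : Rˣ) : R) x := by
    simpa only [Units.val_pow_eq_pow_val] using (hq x).pow_left m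
  have rescale (β : ℕ) (hβ : β ≤ N + 1) :
      SemiconjBy (M α (n + 1)) (((q ^ min β α : Rˣ) : R) * M β n) (M β n) := by
    rcases hβ.lt_or_eq with hlt | rfl
    · refine semiconjBy_mul_of_mul_eq (central _ _) ?_
      simpa only [Units.val_pow_eq_pow_val] using hcom β α n (Nat.lt_succ_iff.mp hlt) hαN
    · simp only [hMtop, mul_zero, SemiconjBy.zero_right]
  have hz := rescale α (by omega)
  have hp := rescale (α + 1) (by omega)
  have hw := rescale (α - 1) (by omega)
  rw [min_self] at hz
  rw [min_eq_right α.le_succ] at hp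
  rw [min_eq_left (α.sub_le 1)] at hw
  have hratio : (q ^ α)⁻¹ * q ^ (α - 1) = q⁻¹ := by
    rw [inv_mul_eq_iff_eq_mul, eq_mul_inv_iff_mul_eq, pow_sub_one_mul (by omega)]
  rw [zpow_neg, zpow_natCast, ← hratio]
  exact inv_mul_swap_eq_of_semiconjBy (hMreg α (n + 1) hα hαN) (central _ _)
    (central _ _) (central _ _) (by simpa only [Units.val_pow_eq_pow_val] using hMsys α n hα hαN)
    hz hp hw

theorem quantum_Q_left_M_system
    {R : Type*} [Ring R] (q A Δ : Rˣ)
    (hq : ∀ x : R, (q : R) * x = x * (q : R))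
    (r : ℕ) (hr : 1 ≤ r)
    (M Mi : ℕ → ℤ → R)
    (hM0 : ∀ n : ℤ, M 0 n = 1)
    (hMtop : ∀ n : ℤ, M (r + 2) n = 0)
    (hMiL : ∀ (α : ℕ) (n : ℤ), α ≤ r + 1 → M α n * Mi α n = 1)
    (hMiR : ∀ (α : ℕ) (n : ℤ), α ≤ r + 1 → Mi α n * M α n = 1)
    (hMsys : ∀ (α : ℕ) (n : ℤ), 1 ≤ α → α ≤ r + 1 →
      (q : R) ^ α * M α (n + 1) * M α (n - 1) = M α n ^ 2 - M (α + 1) n * M (α - 1) n)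
    (hcom : ∀ (α β ε : ℕ) (n : ℤ), ε ≤ 1 → α ≤ r + 1 → β ≤ r + 1 →
      M α n * M β (n + (ε : ℤ)) = (q : R) ^ (ε * min α β) * M β (n + (ε : ℤ)) * M α n)
    (hAΔ : ∀ n : ℤ, M (r + 1) n = ((A ^ n : Rˣ) : R) * (Δ : R))
    (hΔM : ∀ (α : ℕ) (n : ℤ), 1 ≤ α → α ≤ r + 1 →
      (Δ : R) * M α n = ((q ^ ((α : ℤ) * n) : Rˣ) : R) * M α n * (Δ : R))
    (hAM : ∀ (α : ℕ) (n : ℤ), 1 ≤ α → α ≤ r + 1 →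
      (A : R) * M α n = ((q ^ (-(α : ℤ)) : Rˣ) : R) * M α n * (A : R))
    (hΔA : (Δ : R) * (A : R) = (q : R) ^ (r + 1) * (A : R) * (Δ : R)) :
    ∀ (α : ℕ) (n : ℤ), 1 ≤ α → α ≤ r + 1 →
      ((q ^ (-(α : ℤ)) : Rˣ) : R) * M α (n - 1) * M α (n + 1)
        = M α n ^ 2 - ((q⁻¹ : Rˣ) : R) * M (α + 1) n * M (α - 1) n := by
  refine quantum_Q_left_M_system_general q hq (r + 1) M hMtop (fun α n _ hα ↦ ?_) hMsys
    fun α β n hα hβ ↦ by simpa only [Nat.cast_one, one_mul] using hcom α β 1 n le_rfl hα hβ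
  exact isLeftRegular_of_mul_eq_one (hMiR α n hα)
end

section
/- Zipper identity (coefficient form of the Miura factor exchange): under these hypotheses, for all 1 ≤ α ≤ r and n ∈ ℤ, ξ_{α+1,n}^{−1}·(ξ_{α,n} − ξ_{α,n-1}) = (ξ_{α,n}^{−1} − ξ_{α,n+1}^{−1})·ξ_{α-1,n}, which is the identity of the coefficients of D in the operator equation (D − x_{α+1,n})(D − ξ_{α,n}^{−1}ξ_{α-1,n-1}) = (D − ξ_{α+1,n}^{−1}ξ_{α,n-1})(D − x_{α,n-1}). -/
/-- ξ_{α,n} := M_{α,n} · M_{α,n+1}⁻¹ -/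
def xiv {R : Type*} [Ring R] (M Mi : ℕ → ℤ → R) (α : ℕ) (n : ℤ) : R :=
  M α n * Mi α (n + 1)

/-- ξ_{α,n}⁻¹ = M_{α,n+1} · M_{α,n}⁻¹ -/
def xivInv {R : Type*} [Ring R] (M Mi : ℕ → ℤ → R) (α : ℕ) (n : ℤ) : R :=
  M α (n + 1) * Mi α n

/-- x_{α,n} := ξ_{α,n}⁻¹ · ξ_{α-1,n} -/
def xv {R : Type*} [Ring R] (M Mi : ℕ → ℤ → R) (α : ℕ) (n : ℤ) : R :=
  xivInv M Mi α n * xiv M Mi (α - 1) n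

/-!
Each difference of neighbouring ratios is a single monomial: the M-system at `(α, n)` and at
`(α, n + 1)` gives

  `ξ_{α,n} - ξ_{α,n-1} = M_{α+1,n} M_{α,n+1}⁻¹ M_{α-1,n} M_{α,n}⁻¹`,
  `ξ_{α,n}⁻¹ - ξ_{α,n+1}⁻¹ = M_{α+1,n+1} M_{α-1,n+1} M_{α,n+1}⁻¹ M_{α,n}⁻¹`.

The two sides of the zipper identity are then monomials, and they agree because `M_{α,n}` and
`M_{α-1,n}` `q`-commute with `M_{α-1,n+1}` with the same factor, so that `M_{α,n}⁻¹ M_{α-1,n}`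
commutes with `M_{α-1,n+1}`.
-/

theorem inv_mul_mul_inv_eq_of_semiconjBy {G : Type*} [Group G] {a a₁ c c₁ z : G}
    (hac₁ : SemiconjBy a c₁ z) (hcc₁ : SemiconjBy c c₁ z)
    (hac : Commute a c) (ha₁c₁ : Commute a₁ c₁) :
    a₁⁻¹ * c * a⁻¹ = c₁ * a₁⁻¹ * a⁻¹ * c * c₁⁻¹ := by
  have hratio : Commute (a⁻¹ * c) c₁ := hac₁.inv_symm_left.mul_left hcc₁
  calc a₁⁻¹ * c * a⁻¹
      = a₁⁻¹ * (a⁻¹ * c * c₁) * c₁⁻¹ := by rw [mul_assoc, ← hac.inv_left.eq]; group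
    _ = a₁⁻¹ * c₁ * (a⁻¹ * c) * c₁⁻¹ := by rw [hratio.eq]; group
    _ = c₁ * a₁⁻¹ * a⁻¹ * c * c₁⁻¹ := by rw [ha₁c₁.inv_left.eq]; group

section Ring

variable {R : Type*} [Ring R] {a a₁ : Rˣ}

theorem mul_inv_sub_mul_inv_eq_mul_inv_mul_mul_inv {a₀ b c z : R}
    (haa₁ : SemiconjBy (a : R) a₁ z) (hba₁ : SemiconjBy b a₁ z)
    (hsys : z * a₀ = (a : R) ^ 2 - b * c) :
    (a : R) * ↑a₁⁻¹ - a₀ * ↑a⁻¹ = b * ↑a₁⁻¹ * c * ↑a⁻¹ := by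
  have hz : z = ↑(a * a₁ * a⁻¹) := (Units.eq_mul_inv_iff_mul_eq a).2 haa₁.eq.symm
  have hz_unit : IsUnit z := hz ▸ Units.isUnit _
  apply hz_unit.mul_left_cancel
  calc z * ((a : R) * ↑a₁⁻¹ - a₀ * ↑a⁻¹)
      = z * a * ↑a₁⁻¹ - z * a₀ * ↑a⁻¹ := by noncomm_ring
    _ = a - ((a : R) ^ 2 - b * c) * ↑a⁻¹ := by
        rw [← haa₁.eq, Units.mul_inv_cancel_right, hsys]
    _ = b * c * ↑a⁻¹ := by rw [sub_mul, sq, Units.mul_inv_cancel_right, sub_sub_cancel]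
    _ = z * b * ↑a₁⁻¹ * c * ↑a⁻¹ := by rw [← hba₁.eq, Units.mul_inv_cancel_right]
    _ = z * (b * ↑a₁⁻¹ * c * ↑a⁻¹) := by simp only [mul_assoc]

theorem mul_inv_sub_mul_inv_eq_mul_inv_mul_inv {a₂ d z : R}
    (hz : SemiconjBy (a₁ : R) z a) (hsys : a₂ * z = (a₁ : R) ^ 2 - d) :
    (a₁ : R) * ↑a⁻¹ - a₂ * ↑a₁⁻¹ = d * ↑a₁⁻¹ * ↑a⁻¹ := by
  have hz_right : (↑a₁⁻¹ : R) * a * a₁ = z := by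
    rw [mul_assoc, ← hz.eq, Units.inv_mul_cancel_left]
  rw [Units.eq_mul_inv_iff_mul_eq, Units.eq_mul_inv_iff_mul_eq]
  calc ((a₁ : R) * ↑a⁻¹ - a₂ * ↑a₁⁻¹) * a * a₁
      = a₁ * (↑a⁻¹ * a) * a₁ - a₂ * (↑a₁⁻¹ * a * a₁) := by noncomm_ring
    _ = (a₁ : R) ^ 2 - a₂ * z := by rw [hz_right, Units.inv_mul, mul_one, sq]
    _ = d := by rw [hsys, sub_sub_cancel]

/-- In the application `a`, `b`, `c` are `M_{α,n}`, `M_{α+1,n}`, `M_{α-1,n}`, the subscripts `0`, `1`,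
`2` shift `n` by `-1`, `1`, `2`, and the powers of `q` are absorbed into `x = q^{α-1} c₁`,
`y = q^α a₁` and `z = q^α a`. -/
theorem zipper_identity_of_semiconjBy {b c c₁ : Rˣ} {a₀ a₂ b₁ x y z : R}
    (hac : Commute (a : R) c) (ha₁c₁ : Commute (a₁ : R) c₁)
    (hac₁ : SemiconjBy (a : R) c₁ x) (hcc₁ : SemiconjBy (c : R) c₁ x)
    (haa₁ : SemiconjBy (a : R) a₁ y) (hba₁ : SemiconjBy (b : R) a₁ y)
    (hsys : y * a₀ = (a : R) ^ 2 - b * c)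
    (hz : SemiconjBy (a₁ : R) z a) (hsys₁ : a₂ * z = (a₁ : R) ^ 2 - b₁ * c₁) :
    b₁ * ↑b⁻¹ * (a * ↑a₁⁻¹ - a₀ * ↑a⁻¹) = (a₁ * ↑a⁻¹ - a₂ * ↑a₁⁻¹) * (c * ↑c₁⁻¹) := by
  have hleft := mul_inv_sub_mul_inv_eq_mul_inv_mul_mul_inv haa₁ hba₁ hsys
  have hright := mul_inv_sub_mul_inv_eq_mul_inv_mul_inv hz hsys₁
  have hmonomial : (↑a₁⁻¹ * c * ↑a⁻¹ : R) = c₁ * ↑a₁⁻¹ * ↑a⁻¹ * c * ↑c₁⁻¹ := by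
    obtain rfl : x = ↑(a * c₁ * a⁻¹) := (Units.eq_mul_inv_iff_mul_eq a).2 hac₁.eq.symm
    exact_mod_cast inv_mul_mul_inv_eq_of_semiconjBy hac₁.units_of_val hcc₁.units_of_val
      hac.units_of_val ha₁c₁.units_of_val
  calc b₁ * ↑b⁻¹ * (a * ↑a₁⁻¹ - a₀ * ↑a⁻¹)
      = b₁ * (↑b⁻¹ * b) * (↑a₁⁻¹ * c * ↑a⁻¹) := by rw [hleft]; noncomm_ring
    _ = b₁ * (c₁ * ↑a₁⁻¹ * ↑a⁻¹ * c * ↑c₁⁻¹) := by rw [Units.inv_mul, mul_one, hmonomial]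
    _ = (a₁ * ↑a⁻¹ - a₂ * ↑a₁⁻¹) * (c * ↑c₁⁻¹) := by rw [hright]; noncomm_ring

end Ring

theorem quantum_Q_zipper_identity_general
    {R : Type*} [Ring R] (q : R) (hq : ∀ x : R, q * x = x * q) (r : ℕ) (M Mi : ℕ → ℤ → R)
    (hMiL : ∀ (α : ℕ) (n : ℤ), α ≤ r + 1 → M α n * Mi α n = 1)
    (hMiR : ∀ (α : ℕ) (n : ℤ), α ≤ r + 1 → Mi α n * M α n = 1)
    (hMsys : ∀ (α : ℕ) (n : ℤ), 1 ≤ α → α ≤ r →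
      q ^ α * M α (n + 1) * M α (n - 1) = M α n ^ 2 - M (α + 1) n * M (α - 1) n)
    (hcom : ∀ (α β ε : ℕ) (n : ℤ), ε ≤ 1 → α ≤ r + 1 → β ≤ r + 1 →
      M α n * M β (n + (ε : ℤ)) = q ^ (ε * min α β) * M β (n + (ε : ℤ)) * M α n)
    (α : ℕ) (n : ℤ) (hα : 1 ≤ α) (hαr : α ≤ r) :
    xivInv M Mi (α + 1) n * (xiv M Mi α n - xiv M Mi α (n - 1))
      = (xivInv M Mi α n - xivInv M Mi α (n + 1)) * xiv M Mi (α - 1) n := by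
  obtain ⟨k, rfl⟩ : ∃ k, α = k + 1 := ⟨α - 1, by omega⟩
  let U (β : ℕ) (m : ℤ) (hβ : β ≤ r + 1) : Rˣ := ⟨M β m, Mi β m, hMiL β m hβ, hMiR β m hβ⟩
  have hcomm (β γ : ℕ) (m : ℤ) (hβ : β ≤ r + 1) (hγ : γ ≤ r + 1) :
      Commute (M β m) (M γ m) := by
    simpa [Commute, SemiconjBy] using hcom β γ 0 m zero_le_one hβ hγ
  have hqcomm (β γ : ℕ) (m : ℤ) (hγβ : γ ≤ β) (hβ : β ≤ r + 1) :
      SemiconjBy (M β m) (M γ (m + 1)) (q ^ γ * M γ (m + 1)) := by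
    simpa [SemiconjBy, hγβ] using hcom β γ 1 m le_rfl hβ (hγβ.trans hβ)
  have hqpow (x : R) : Commute (q ^ (k + 1)) x := Commute.pow_left (hq x) _
  have hself : SemiconjBy (M (k + 1) (n + 1)) (q ^ (k + 1) * M (k + 1) n) (M (k + 1) n) := by
    rw [SemiconjBy, (hqcomm (k + 1) (k + 1) n le_rfl (by omega)).eq, ← mul_assoc,
      (hqpow (M (k + 1) (n + 1))).eq]
  have hsys₁ : M (k + 1) (n + 1 + 1) * (q ^ (k + 1) * M (k + 1) n) =
      M (k + 1) (n + 1) ^ 2 - M (k + 2) (n + 1) * M k (n + 1) := by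
    rw [← mul_assoc, ← (hqpow _).eq]
    simpa using hMsys (k + 1) (n + 1) hα hαr
  have hzip := zipper_identity_of_semiconjBy
    (a := U (k + 1) n (by omega)) (a₁ := U (k + 1) (n + 1) (by omega))
    (b := U (k + 2) n (by omega)) (c := U k n (by omega)) (c₁ := U k (n + 1) (by omega))
    (hcomm (k + 1) k n (by omega) (by omega)) (hcomm (k + 1) k (n + 1) (by omega) (by omega))
    (hqcomm (k + 1) k n (by omega) (by omega)) (hqcomm k k n le_rfl (by omega))
    (hqcomm (k + 1) (k + 1) n le_rfl (by omega)) (hqcomm (k + 2) (k + 1) n (by omega) (by omega))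
    (hMsys (k + 1) n hα hαr) hself hsys₁
  simp only [xiv, xivInv, Nat.add_sub_cancel, sub_add_cancel]
  exact hzip

theorem quantum_Q_zipper_identity
    {R : Type*} [Ring R] (q A Δ : Rˣ)
    (hq : ∀ x : R, (q : R) * x = x * (q : R))
    (r : ℕ) (hr : 1 ≤ r)
    (M Mi : ℕ → ℤ → R)
    (hM0 : ∀ n : ℤ, M 0 n = 1)
    (hMtop : ∀ n : ℤ, M (r + 2) n = 0)
    (hMiL : ∀ (α : ℕ) (n : ℤ), α ≤ r + 1 → M α n * Mi α n = 1)
    (hMiR : ∀ (α : ℕ) (n : ℤ), α ≤ r + 1 → Mi α n * M α n = 1)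
    (hMsys : ∀ (α : ℕ) (n : ℤ), 1 ≤ α → α ≤ r + 1 →
      (q : R) ^ α * M α (n + 1) * M α (n - 1) = M α n ^ 2 - M (α + 1) n * M (α - 1) n)
    (hcom : ∀ (α β ε : ℕ) (n : ℤ), ε ≤ 1 → α ≤ r + 1 → β ≤ r + 1 →
      M α n * M β (n + (ε : ℤ)) = (q : R) ^ (ε * min α β) * M β (n + (ε : ℤ)) * M α n)
    (hAΔ : ∀ n : ℤ, M (r + 1) n = ((A ^ n : Rˣ) : R) * (Δ : R))
    (hΔM : ∀ (α : ℕ) (n : ℤ), 1 ≤ α → α ≤ r + 1 →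
      (Δ : R) * M α n = ((q ^ ((α : ℤ) * n) : Rˣ) : R) * M α n * (Δ : R))
    (hAM : ∀ (α : ℕ) (n : ℤ), 1 ≤ α → α ≤ r + 1 →
      (A : R) * M α n = ((q ^ (-(α : ℤ)) : Rˣ) : R) * M α n * (A : R))
    (hΔA : (Δ : R) * (A : R) = (q : R) ^ (r + 1) * (A : R) * (Δ : R)) :
    ∀ (α : ℕ) (n : ℤ), 1 ≤ α → α ≤ r →
      xivInv M Mi (α + 1) n * (xiv M Mi α n - xiv M Mi α (n - 1))
        = (xivInv M Mi α n - xivInv M Mi α (n + 1)) * xiv M Mi (α - 1) n :=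
  quantum_Q_zipper_identity_general (q : R) hq r M Mi hMiL hMiR
    (fun α n hα hαr => hMsys α n hα (hαr.trans r.le_succ)) hcom
end
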